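/- Let n be a positive integer with n ≡ 2 (mod 3) and let M = (2n-1)/3 or M = n-1. Then, modulo [n]*Phi_n(q)^5, sum_{k=0}^{M} [6k+1] ((q;q^3)_k^6 / (q^3;q^3)_k^6) q^{3k} ≡ 5 [2n] * ((q^2;q^3)_{(2n-1)/3}^3 / (q^3;q^3)_{(2n-1)/3}^3). -/

import Mathlib

open Finset

/-- The generator `q` of the field `ℚ(q)` of rational functions. -/
noncomputable def q : RatFunc ℚ := RatFunc.X

/-- The `q`-integer `[r] = (1 - q^r)/(1 - q)`. -/
noncomputable def qint (r : ℤ) : RatFunc ℚ := (1 - q ^ r) / (1 - q)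

/-- The `q`-shifted factorial `(x; b)_m = (1-x)(1-xb)⋯(1-x b^(m-1))`. -/
noncomputable def qpoch (x b : RatFunc ℚ) (m : ℕ) : RatFunc ℚ :=
  ∏ i ∈ Finset.range m, (1 - x * b ^ i)

/-- `f ≡ g (mod P)`: `f - g = P * (r/s)` with `s` coprime to `P`. -/
def qcong (f g : RatFunc ℚ) (P : Polynomial ℚ) : Prop :=
  ∃ r s : Polynomial ℚ, IsCoprime s P ∧
    f - g = algebraMap (Polynomial ℚ) (RatFunc ℚ) P *
      (algebraMap (Polynomial ℚ) (RatFunc ℚ) r / algebraMap (Polynomial ℚ) (RatFunc ℚ) s)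


lemma core_id {A : Type*} [CommRing A] (y t L b c d : A) :
    (1 - (L*b*c*d)*y^2) * ((1-L*t)*(1-L*(L*b*c*d)*(y*t)*y)*((1-y*t)*(1-L*c*d*(y*t))*(1-L*b*d*(y*t))*(1-L*b*c*(y*t)))
      - (1-L*(L*b*c*d)*(y*t))*(1-L*d*(y*t))*(1-L*c*(y*t))*(1-L*b*(y*t))*(1-t)*(1-(L*b*c*d)*(y*t)*y))
    = -t*(1-L*(L*b*c*d)*(y*t)^2) * (L*(1-(L*b*c*d)*y)*(1-b*y)*(1-c*y)*(1-d*y)*(1-L*(L*b*c*d)*(y*t)*y)*(1-t)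
      - (1-y)*(1-L*c*d*y)*(1-L*b*d*y)*(1-L*b*c*y)*(1-L*t)*(1-(L*b*c*d)*(y*t)*y)) := by
  ring

def pc {A : Type*} [CommRing A] (a p : A) (n : ℕ) : A := ∏ i ∈ range n, (1 - a * p ^ i)

lemma pc_succ {A : Type*} [CommRing A] (a p : A) (n : ℕ) :
    pc a p (n+1) = pc a p n * (1 - a * p ^ n) := by
  simp [pc, Finset.prod_range_succ]

lemma pc_zero {A : Type*} [CommRing A] (a p : A) : pc a p 0 = 1 := by simp [pc]

lemma pc_ne {K : Type*} [Field K] (a p : K) (n : ℕ) (h : ∀ i < n, 1 - a * p ^ i ≠ 0) :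
    pc a p n ≠ 0 := by
  unfold pc
  rw [Finset.prod_ne_zero_iff]
  intro i hi
  exact h i (Finset.mem_range.1 hi)

section bailey
variable {K : Type*} [Field K] (L b c d p : K)

def bB (k : ℕ) : K := pc (L*b*c*d) p k * pc b p k * pc c p k * pc d p k /
  (pc p p k * pc (L*c*d*p) p k * pc (L*b*d*p) p k * pc (L*b*c*p) p k) * (L*p)^k

def bV (N k : ℕ) : K := pc (L*p) p (N-k) * pc (L*p*(L*b*c*d)) p (N+k) /
  (pc p p (N-k) * pc (L*b*c*d*p) p (N+k))

def bW (N k : ℕ) : K := pc (L*p) p (N+1-k) * pc (L*p*(L*b*c*d)) p (N+k) /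
  (pc p p (N+1-k) * pc (L*b*c*d*p) p (N+k))

def bR (N : ℕ) : K := pc (L*p*(L*b*c*d)) p N * pc (L*d*p) p N * pc (L*c*p) p N * pc (L*b*p) p N /
  (pc p p N * pc (L*c*d*p) p N * pc (L*b*d*p) p N * pc (L*b*c*p) p N)

def bDel (Z : K) : K := (1-Z)*(1-L*c*d*Z)*(1-L*b*d*Z)*(1-L*b*c*Z)

def bG (N k : ℕ) : K := -p^(N+1)*(1-L*(L*b*c*d)*(p^(N+1))^2) / bDel L b c d (p^(N+1)) *
  (bB L b c d p k * (bDel L b c d (p^k)) / p^k * bW L b c d p N k)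

lemma bstep (hp : p ≠ 0) (k j : ℕ)
    (h1 : ∀ i < k + j + 1, 1 - p^(i+1) ≠ 0)
    (h2 : ∀ i < 2*(k+j+1), 1 - (L*b*c*d)*p^(i+1) ≠ 0)
    (hb : ∀ i < k + j + 1, 1 - L*c*d*p^(i+1) ≠ 0)
    (hc : ∀ i < k + j + 1, 1 - L*b*d*p^(i+1) ≠ 0)
    (hd : ∀ i < k + j + 1, 1 - L*b*c*p^(i+1) ≠ 0) :
    (1 - (L*b*c*d)*p^(2*k)) * bB L b c d p k * bV L b c d p (k+j+1) k
     - (1-L*(L*b*c*d)*p^(k+j+1))*(1-L*d*p^(k+j+1))*(1-L*c*p^(k+j+1))*(1-L*b*p^(k+j+1))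
        / bDel L b c d (p^(k+j+1)) * ((1 - (L*b*c*d)*p^(2*k)) * bB L b c d p k * bV L b c d p (k+j) k)
     = bG L b c d p (k+j) (k+1) - bG L b c d p (k+j) k := by
  have hy : p^k ≠ 0 := pow_ne_zero _ hp
  have e0 : p^(k+j+1) = p^k * p^(j+1) := by ring
  have hDel : bDel L b c d (p^(k+j+1)) ≠ 0 := by
    unfold bDel
    exact mul_ne_zero (mul_ne_zero (mul_ne_zero (h1 _ (by omega)) (hb _ (by omega))) (hc _ (by omega))) (hd _ (by omega))
  have ht : 1 - p^(j+1) ≠ 0 := h1 j (by omega)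
  have ha : 1 - (L*b*c*d)*(p^k*p^(j+1))*p^k ≠ 0 := by
    have := h2 (k+j+k) (by omega)
    convert this using 2; ring
  have hDk : bDel L b c d (p^(k+1)) ≠ 0 := by
    unfold bDel
    exact mul_ne_zero (mul_ne_zero (mul_ne_zero (h1 _ (by omega)) (hb _ (by omega))) (hc _ (by omega))) (hd _ (by omega))
  set b0 := bB L b c d p k * bV L b c d p (k+j) k with hb0
  have E1 : bB L b c d p k * bV L b c d p (k+j+1) k =
      b0 * ((1-L*p^(j+1))*(1-L*(L*b*c*d)*(p^k*p^(j+1))*p^k)/((1-p^(j+1))*(1-(L*b*c*d)*(p^k*p^(j+1))*p^k))) := by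
    rw [hb0, mul_assoc]; congr 1
    unfold bV
    rw [show k+j+1-k = j+1 by omega, show k+j-k = j by omega, show k+j+1+k = (k+j+k)+1 by omega]
    simp only [pc_succ]
    rw [div_mul_div_comm]
    congr 1 <;> ring
  have E2 : bB L b c d p k * bW L b c d p (k+j) k = b0 * ((1-L*p^(j+1))/(1-p^(j+1))) := by
    rw [hb0, mul_assoc]; congr 1
    unfold bV bW
    rw [show k+j+1-k = j+1 by omega, show k+j-k = j by omega]
    simp only [pc_succ]
    rw [div_mul_div_comm]
    congr 1 <;> ring
  have E3 : bB L b c d p (k+1) * bDel L b c d (p^(k+1)) = bB L b c d p k * (L * p * ((1-(L*b*c*d)*p^k)*(1-b*p^k)*(1-c*p^k)*(1-d*p^k))) := by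
    have : bB L b c d p (k+1) = bB L b c d p k * (L * p * ((1-(L*b*c*d)*p^k)*(1-b*p^k)*(1-c*p^k)*(1-d*p^k)) / bDel L b c d (p^(k+1))) := by
      unfold bB bDel
      simp only [pc_succ]
      rw [div_mul_eq_mul_div, div_mul_eq_mul_div, div_mul_div_comm]
      congr 1 <;> ring
    rw [this, mul_assoc, div_mul_cancel₀ _ hDk]
  have E4 : bB L b c d p k * bW L b c d p (k+j) (k+1) = b0 * ((1-L*(L*b*c*d)*(p^k*p^(j+1))*p^k)/(1-(L*b*c*d)*(p^k*p^(j+1))*p^k)) := by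
    rw [hb0, mul_assoc]; congr 1
    unfold bV bW
    rw [show k+j+1-(k+1) = j by omega, show k+j-k = j by omega, show k+j+(k+1) = (k+j+k)+1 by omega]
    simp only [pc_succ]
    rw [div_mul_div_comm]
    congr 1 <;> ring
  have G1 : bG L b c d p (k+j) k = -p^(k+j+1)*(1-L*(L*b*c*d)*(p^(k+j+1))^2) / bDel L b c d (p^(k+j+1)) *
      (bDel L b c d (p^k) / p^k * (b0 * ((1-L*p^(j+1))/(1-p^(j+1))))) := by
    rw [← E2]; unfold bG; ring
  have G2 : bG L b c d p (k+j) (k+1) = -p^(k+j+1)*(1-L*(L*b*c*d)*(p^(k+j+1))^2) / bDel L b c d (p^(k+j+1)) *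
      (L * ((1-(L*b*c*d)*p^k)*(1-b*p^k)*(1-c*p^k)*(1-d*p^k)) / p^k * (b0 * ((1-L*(L*b*c*d)*(p^k*p^(j+1))*p^k)/(1-(L*b*c*d)*(p^k*p^(j+1))*p^k)))) := by
    rw [← E4]; unfold bG
    rw [E3]
    field_simp
    ring
  rw [mul_assoc, E1, mul_assoc (1 - (L*b*c*d)*p^(2*k)), ← hb0, G1, G2]
  have key := core_id (p^k) (p^(j+1)) L b c d
  rw [e0] at hDel ⊢
  rw [show p^(2*k) = (p^k)^2 by ring]
  generalize p^k = y at *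
  generalize p^(j+1) = t at *
  clear_value b0
  rw [show bDel L b c d y = (1-y)*(1-L*c*d*y)*(1-L*b*d*y)*(1-L*b*c*y) from rfl]
  rw [show (1-y*t)*(1-L*c*d*(y*t))*(1-L*b*d*(y*t))*(1-L*b*c*(y*t)) = bDel L b c d (y*t) from rfl] at key
  generalize bDel L b c d (y*t) = Δ at *
  clear h1 h2 hb hc hd E1 E2 E3 E4 G1 G2 hb0 hDk e0
  generalize hx1 : 1 - L*(L*b*c*d)*(y*t)*y = x1 at *
  generalize hx2 : 1 - (L*b*c*d)*(y*t)*y = x2 at *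
  generalize hx3 : 1 - t = x3 at *
  generalize hx4 : 1 - L*t = x4 at *
  generalize hx5 : (1-L*(L*b*c*d)*(y*t))*(1-L*d*(y*t))*(1-L*c*(y*t))*(1-L*b*(y*t)) = x5 at *
  generalize hx6 : (1-y)*(1-L*c*d*y)*(1-L*b*d*y)*(1-L*b*c*y) = x6 at *
  have hx7 : L*(1-(L*b*c*d)*y)*(1-b*y)*(1-c*y)*(1-d*y) = L*((1-(L*b*c*d)*y)*(1-b*y)*(1-c*y)*(1-d*y)) := by ring
  rw [hx7] at key
  generalize hx8 : L*((1-(L*b*c*d)*y)*(1-b*y)*(1-c*y)*(1-d*y)) = x7 at *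
  generalize hx9 : 1 - L*b*c*d*y^2 = x8 at *
  generalize hx10 : 1 - L*(L*b*c*d)*(y*t)^2 = x9 at *
  clear hx1 hx2 hx3 hx4 hx5 hx6 hx7 hx8 hx9 hx10
  field_simp
  linear_combination b0 * key

lemma bailey (hp : p ≠ 0) (N : ℕ)
    (h1 : ∀ i < N, 1 - p^(i+1) ≠ 0)
    (h2 : ∀ i < 2*N, 1 - (L*b*c*d)*p^(i+1) ≠ 0)
    (hb : ∀ i < N, 1 - L*c*d*p^(i+1) ≠ 0)
    (hc : ∀ i < N, 1 - L*b*d*p^(i+1) ≠ 0)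
    (hd : ∀ i < N, 1 - L*b*c*p^(i+1) ≠ 0) :
    ∑ k ∈ range (N+1), (1 - (L*b*c*d)*p^(2*k)) * bB L b c d p k * bV L b c d p N k
      = (1 - L*b*c*d) * bR L b c d p N := by
  induction N with
  | zero => simp [bB, bV, bR, pc_zero]
  | succ N ih =>
    have ih' := ih (fun i hi => h1 i (by omega)) (fun i hi => h2 i (by omega)) (fun i hi => hb i (by omega)) (fun i hi => hc i (by omega)) (fun i hi => hd i (by omega))
    have hstep : ∀ k ∈ range (N+1), (1 - (L*b*c*d)*p^(2*k)) * bB L b c d p k * bV L b c d p (N+1) k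
      = (1-L*(L*b*c*d)*p^(N+1))*(1-L*d*p^(N+1))*(1-L*c*p^(N+1))*(1-L*b*p^(N+1))
        / bDel L b c d (p^(N+1)) * ((1 - (L*b*c*d)*p^(2*k)) * bB L b c d p k * bV L b c d p N k)
        + (bG L b c d p N (k+1) - bG L b c d p N k) := by
      intro k hk
      obtain ⟨j, rfl⟩ : ∃ j, N = k + j := ⟨N - k, by have := mem_range.1 hk; omega⟩
      have := bstep L b c d p hp k j h1 h2 hb hc hd
      linear_combination this
    rw [sum_range_succ, sum_congr rfl hstep, sum_add_distrib, ← mul_sum, ih', Finset.sum_range_sub]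
    have hDel : bDel L b c d (p^(N+1)) ≠ 0 := by
      unfold bDel
      exact mul_ne_zero (mul_ne_zero (mul_ne_zero (h1 _ (by omega)) (hb _ (by omega))) (hc _ (by omega))) (hd _ (by omega))
    have g0 : bG L b c d p N 0 = 0 := by simp [bG, bDel]
    have hR : bR L b c d p (N+1) = (1-L*(L*b*c*d)*p^(N+1))*(1-L*d*p^(N+1))*(1-L*c*p^(N+1))*(1-L*b*p^(N+1))
        / bDel L b c d (p^(N+1)) * bR L b c d p N := by
      unfold bR bDel
      simp only [pc_succ]
      rw [div_mul_div_comm]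
      congr 1 <;> ring
    have hy : p^(N+1) ≠ 0 := pow_ne_zero _ hp
    have hlast : (1 - (L*b*c*d)*p^(2*(N+1))) * bB L b c d p (N+1) * bV L b c d p (N+1) (N+1) = - bG L b c d p N (N+1) := by
      have ha : 1 - L*b*c*d*p*p^(N+(N+1)) ≠ 0 := by
        have := h2 (N+(N+1)) (by omega)
        convert this using 2; ring
      unfold bG bV bW
      simp only [Nat.sub_self, pc_zero]
      rw [show N+1+(N+1) = (N+(N+1))+1 by omega]
      simp only [pc_succ]
      have e1 : 1 - L*b*c*d*p*p^(N+(N+1)) = 1 - (L*b*c*d)*p^(2*(N+1)) := by ring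
      rw [e1] at ha ⊢
      rw [show 1 - L*p*(L*b*c*d)*p^(N+(N+1)) = 1-L*(L*b*c*d)*(p^(N+1))^2 by ring]
      generalize 1 - (L*b*c*d)*p^(2*(N+1)) = z at *
      have hq : pc (L*b*c*d*p) p (N+(N+1)) ≠ 0 := by
        apply pc_ne
        intro i hi
        have := h2 i (by omega)
        convert this using 2; ring
      field_simp
    rw [hlast, g0, hR]; ring

end bailey


def Pgen {A : Type*} [CommRing A] (q : A) (m : ℕ) (N D : ℕ → A) : A :=
  ∑ k ∈ range (m+1), (1 - q^(6*k+1)) * q^(3*k) * (∏ i ∈ range k, N i) * ∏ i ∈ Ico k m, D i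

lemma Pgen_map {A B : Type*} [CommRing A] [CommRing B] (f : A →+* B) (q : A) (m : ℕ) (N D : ℕ → A) :
    f (Pgen q m N D) = Pgen (f q) m (fun i => f (N i)) (fun i => f (D i)) := by
  simp [Pgen, map_sum, map_prod]

lemma Pgen_congr {A : Type*} [CommRing A] (q : A) (m : ℕ) (N D N' D' : ℕ → A)
    (hN : ∀ i, N i = N' i) (hD : ∀ i, D i = D' i) : Pgen q m N D = Pgen q m N' D' := by
  rw [funext hN, funext hD]

lemma Pgen_scale {A : Type*} [CommRing A] (q c : A) (m : ℕ) (N D : ℕ → A) :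
    Pgen q m (fun i => c * N i) (fun i => c * D i) = c^m * Pgen q m N D := by
  unfold Pgen
  rw [mul_sum]
  apply sum_congr rfl
  intro k hk
  have hk' := mem_range.1 hk
  rw [prod_mul_distrib, prod_mul_distrib, prod_const, prod_const, card_range, Nat.card_Ico]
  obtain ⟨j, rfl⟩ : ∃ j, m = k + j := ⟨m - k, by omega⟩
  rw [show k + j - k = j by omega, pow_add]; ring

lemma prod_sym {A : Type*} [CommRing A] (q : A) (k j : ℕ) (N D : ℕ → A)
    (h : ∀ i l, i + l + 1 = k + j → D i = q^(18*(i+1)) * N l) :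
    ∏ i ∈ Ico k (k+j), D i = q^(9*j*(2*k+j+1)) * ∏ i ∈ range j, N i := by
  rw [prod_Ico_eq_prod_range, show k + j - k = j by omega]
  have h1 : ∀ i ∈ range j, D (k+i) = q^(18*(k+i+1)) * N (j-1-i) := by
    intro i hi
    have := mem_range.1 hi
    exact h _ _ (by omega)
  rw [prod_congr rfl h1, prod_mul_distrib, Finset.prod_range_reflect]
  congr 1
  clear h h1
  induction j with
  | zero => simp
  | succ j ih => rw [prod_range_succ, ih, ← pow_add]; congr 1; ring

lemma Pgen_zero {A : Type*} [CommRing A] (h2 : ∀ x : A, x = -x → x = 0) (q : A) (m : ℕ)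
    (hq : q^(3*m+1) = 1) (N D : ℕ → A)
    (h : ∀ i l, i + l + 1 = m → D i = q^(18*(i+1)) * N l) : Pgen q m N D = 0 := by
  apply h2
  unfold Pgen
  conv_lhs => rw [← Finset.sum_flip]
  rw [← sum_neg_distrib]
  apply sum_congr rfl
  intro j hj
  obtain ⟨k, rfl⟩ : ∃ k, m = k + j := ⟨m - j, by have := mem_range.1 hj; omega⟩
  rw [show k + j - j = k by omega, prod_sym q k j N D h]
  have e := prod_sym q j k N D (by intro i l hil; exact h i l (by omega))
  rw [add_comm j k] at e
  rw [e]
  have h3 : q^(6*k+1) * q^(6*j+1) = 1 := by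
    rw [← pow_add, show 6*k+1+(6*j+1) = (3*(k+j)+1)*2 by ring, pow_mul, hq, one_pow]
  have h4 : q^(6*k+1+3*k+9*j*(2*k+j+1)) = q^(3*j+9*k*(2*j+k+1)) := by
    apply pow_eq_pow_of_modEq _ hq
    rw [← Int.natCast_modEq_iff]
    symm
    rw [Int.modEq_iff_dvd]
    refine ⟨1 + 3*(j-k), ?_⟩
    push_cast
    ring
  simp only [pow_add] at h3 h4 ⊢
  linear_combination -(q^(3*k) * q^(9*j*(2*k+j+1)))*(∏ x ∈ range k, N x) * (∏ x ∈ range j, N x) * h3 - (1 - q^(6*j)*q^1) * (∏ x ∈ range k, N x) * (∏ x ∈ range j, N x) * h4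

section jack
variable {K : Type*} [Field K]

lemma jack (q x1 x2 x3 x4 T : K) (m : ℕ) (hq : q ≠ 0) (h1 : x1 ≠ 0) (h2 : x2 ≠ 0) (h3 : x3 ≠ 0) (h4 : x4 ≠ 0)
    (hT : T = q^(3*m+1)) (hx : x1*x2*x3*x4 = T)
    (hqq : ∀ i : ℕ, 1 - q^(i+1) ≠ 0)
    (k1 : ∀ i < m, 1 - x1⁻¹ * q^(3*i+3) ≠ 0)
    (k2 : ∀ i < m, 1 - x2⁻¹ * q^(3*i+3) ≠ 0)
    (k3 : ∀ i < m, 1 - x3⁻¹ * q^(3*i+3) ≠ 0)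
    (k4 : ∀ i < m, 1 - x4⁻¹ * q^(3*i+3) ≠ 0)
    (k5 : ∀ i < m, 1 - x4 * T⁻¹ * q^(3*i+2) ≠ 0) :
    Pgen q m (fun i => (1-q^(3*i+1))*(1-x1*q^(3*i+1))*(1-x2*q^(3*i+1))*(1-x3*q^(3*i+1))*(1-x4*q^(3*i+1))*(1-T⁻¹*q^(3*i+1)))
      (fun i => (1-q^(3*i+3))*(1-x1⁻¹*q^(3*i+3))*(1-x2⁻¹*q^(3*i+3))*(1-x3⁻¹*q^(3*i+3))*(1-x4⁻¹*q^(3*i+3))*(1-T*q^(3*i+3)))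
    = (∏ i ∈ range m, (1-q^(3*i+3))) * (∏ i ∈ range m, (1-T*q^(3*i+3))) *
      (∏ i ∈ range m, (1-q^(3*i+1))) * (1-T) * (∏ i ∈ range m, (-x4⁻¹*q^(3*i+3))) *
      (∏ i ∈ range m, (1-x1*x4*T⁻¹*q^(3*i+2))) * (∏ i ∈ range m, (1-x2*x4*T⁻¹*q^(3*i+2)))
      * (∏ i ∈ range m, (1-x3*x4*T⁻¹*q^(3*i+2))) := by
  set N : ℕ → K := (fun i => (1-q^(3*i+1))*(1-x1*q^(3*i+1))*(1-x2*q^(3*i+1))*(1-x3*q^(3*i+1))*(1-x4*q^(3*i+1))*(1-T⁻¹*q^(3*i+1))) with hN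
  set D : ℕ → K := (fun i => (1-q^(3*i+3))*(1-x1⁻¹*q^(3*i+3))*(1-x2⁻¹*q^(3*i+3))*(1-x3⁻¹*q^(3*i+3))*(1-x4⁻¹*q^(3*i+3))*(1-T*q^(3*i+3))) with hD
  have hT0 : T ≠ 0 := by rw [hT]; exact pow_ne_zero _ hq
  have kT : ∀ i : ℕ, 1 - T*q^(3*i+3) ≠ 0 := by
    intro i; rw [hT, ← pow_add]; exact hqq _
  have hD0 : ∀ i < m, D i ≠ 0 := by
    intro i hi
    simp only [hD]
    exact mul_ne_zero (mul_ne_zero (mul_ne_zero (mul_ne_zero (mul_ne_zero (hqq _) (k1 i hi)) (k2 i hi)) (k3 i hi)) (k4 i hi)) (kT i)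
  set L : K := x4 * T⁻¹ * (q^2)⁻¹ with hL
  have ea : L * (q*x1)*(q*x2)*(q*x3) = q := by rw [hL]; field_simp; rw [← hx]; ring
  have eb : L * (q*x2)*(q*x3) = x1⁻¹ := by rw [hL]; field_simp; rw [← hx]; ring
  have ec : L * (q*x1)*(q*x3) = x2⁻¹ := by rw [hL]; field_simp; rw [← hx]; ring
  have ed : L * (q*x1)*(q*x2) = x3⁻¹ := by rw [hL]; field_simp; rw [← hx]; ring
  have B := bailey L (q*x1) (q*x2) (q*x3) (q^3) (pow_ne_zero _ hq) m
    (by intro i hi; rw [← pow_mul]; exact hqq (3*i+2))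
    (by intro i hi; rw [ea, ← pow_mul, ← pow_succ']; exact hqq _)
    (by intro i hi; rw [eb, ← pow_mul]; exact k1 i hi)
    (by intro i hi; rw [ec, ← pow_mul]; exact k2 i hi)
    (by intro i hi; rw [ed, ← pow_mul]; exact k3 i hi)
  have pcq : ∀ (x : K) (e k : ℕ), pc (x*q^e) (q^3) k = ∏ i ∈ range k, (1 - x*q^(3*i+e)) := by
    intro x e k; unfold pc; apply prod_congr rfl; intro i _; congr 1; rw [← pow_mul, add_comm, pow_add]; ring
  rw [ea] at B
  -- pieces
  set c : ℕ → K := fun k => bB L (q*x1) (q*x2) (q*x3) (q^3) k * bV L (q*x1) (q*x2) (q*x3) (q^3) m k with hc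
  have eLp : L * q^3 = x4*T⁻¹*q^1 := by rw [hL]; field_simp
  have eLpa : L * q^3 * q = x4*T⁻¹*q^2 := by rw [hL]; field_simp
  have z1 : ∀ i < m, 1 - x4*T⁻¹*q^(3*i+1) ≠ 0 := by
    intro i hi h
    obtain ⟨l, rfl⟩ : ∃ l, m = i + l + 1 := ⟨m - 1 - i, by omega⟩
    apply k4 l (by omega)
    have e1 : T = x4 * q^(3*i+1) := by field_simp at h; linear_combination h
    have e2 : q^(3*l+3) * q^(3*i+1) = x4 * q^(3*i+1) := by rw [← e1, hT]; ring
    have e3 := mul_right_cancel₀ (pow_ne_zero _ hq) e2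
    rw [e3]; field_simp; ring
  have n1 : pc (q^3) (q^3) m ≠ 0 := by
    apply pc_ne; intro i hi; rw [← pow_succ', ← pow_mul]; exact hqq (3*i+2)
  have n2 : pc (q*q^3) (q^3) m ≠ 0 := by
    apply pc_ne; intro i hi
    have := hqq (3*i+3)
    convert this using 2; ring
  have n3 : pc (L*q^3) (q^3) m ≠ 0 := by
    rw [eLp, pcq, prod_ne_zero_iff]; intro i hi; exact z1 i (mem_range.1 hi)
  have n4 : pc (L*q^3*q) (q^3) m ≠ 0 := by
    rw [eLpa, pcq, prod_ne_zero_iff]; intro i hi; exact k5 i (mem_range.1 hi)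
  have c0 : c 0 = pc (L*q^3) (q^3) m * pc (L*q^3*q) (q^3) m / (pc (q^3) (q^3) m * pc (q*q^3) (q^3) m) := by
    simp [hc, bB, bV, pc_zero, ea]
  have cs : ∀ k < m, c (k+1) = c k * (q^3 * (N k / D k)) := by
    intro k hk
    obtain ⟨j, rfl⟩ : ∃ j, m = k + j + 1 := ⟨m - 1 - k, by omega⟩
    have b1 : bB L (q*x1) (q*x2) (q*x3) (q^3) (k+1) = bB L (q*x1) (q*x2) (q*x3) (q^3) k *
       ((1-q^(3*k+1))*(1-x1*q^(3*k+1))*(1-x2*q^(3*k+1))*(1-x3*q^(3*k+1)) / ((1-q^(3*k+3))*(1-x1⁻¹*q^(3*k+3))*(1-x2⁻¹*q^(3*k+3))*(1-x3⁻¹*q^(3*k+3))) * (L * q^3)) := by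
      unfold bB
      rw [ea, eb, ec, ed]
      simp only [pc_succ, ← pow_mul]
      rw [div_mul_eq_mul_div, div_mul_eq_mul_div, div_mul_eq_mul_div _ _ (L*q^3), div_mul_div_comm]
      congr 1 <;> ring
    have v1 : bV L (q*x1) (q*x2) (q*x3) (q^3) (k+j+1) (k+1) = bV L (q*x1) (q*x2) (q*x3) (q^3) (k+j+1) k *
       ((1-q^(3*j+3)) * (1-x4*q^(3*k+1)) / ((1-x4*T⁻¹*q^(3*j+1))*(1-T*q^(3*k+3)))) := by
      unfold bV
      rw [ea, show k+j+1-(k+1) = j by omega, show k+j+1-k = j+1 by omega, show k+j+1+(k+1) = (k+j+1+k)+1 by omega]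
      simp only [pc_succ]
      have y1 : 1 - L*q^3*(q^3)^j = 1-x4*T⁻¹*q^(3*j+1) := by rw [eLp]; ring
      have y2 : 1 - L*q^3*q*(q^3)^(k+j+1+k) = 1-x4*q^(3*k+1) := by
        have : L*q^3*q*(q^3)^(k+j+1+k) = x4 * T⁻¹ * q^(3*(k+j+1)+1) * q^(3*k+1) := by rw [eLpa]; ring
        rw [this, ← hT]; field_simp
      have y3 : 1 - q^3*(q^3)^j = 1 - q^(3*j+3) := by ring
      have y4 : 1 - q*q^3*(q^3)^(k+j+1+k) = 1 - T*q^(3*k+3) := by rw [hT]; ring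
      rw [y1, y2, y3, y4]
      have w1 : 1-x4*T⁻¹*q^(3*j+1) ≠ 0 := z1 j (by omega)
      have w2 := hqq (3*j+2)
      have w3 := kT k
      rw [div_mul_div_comm, ← mul_div_mul_right _ _ (mul_ne_zero w1 w2)]
      congr 1 <;> ring
    have w : L * q^3 * ((1-q^(3*j+3)) / (1-x4*T⁻¹*q^(3*j+1))) = q^3 * ((1-T⁻¹*q^(3*k+1)) / (1-x4⁻¹*q^(3*k+3))) := by
      have w1 : 1-x4*T⁻¹*q^(3*j+1) ≠ 0 := z1 j (by omega)
      have w2 := k4 k (by omega)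
      rw [mul_div_assoc', mul_div_assoc', div_eq_div_iff w1 w2, eLp]
      have hT' : T = q^(3*j+1) * q^(3*k+3) := by rw [hT]; ring
      have u0 : q^(3*j+1) ≠ 0 := pow_ne_zero _ hq
      have u1 : q^(3*k+3) ≠ 0 := pow_ne_zero _ hq
      have r1 : q^(3*j+3) = q^(3*j+1) * q^2 := by ring
      have r2 : q^(3*k+3) = q^(3*k+1) * q^2 := by ring
      have u2 : q^(3*k+1) ≠ 0 := pow_ne_zero _ hq
      rw [hT', r1, r2]
      generalize q^(3*j+1) = A at *
      generalize q^(3*k+1) = B at *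
      field_simp
      ring
    simp only [hc]
    rw [b1, v1]
    simp only [hN, hD]
    have : (1-q^(3*k+1))*(1-x1*q^(3*k+1))*(1-x2*q^(3*k+1))*(1-x3*q^(3*k+1))*(1-x4*q^(3*k+1))*(1-T⁻¹*q^(3*k+1)) /
      ((1-q^(3*k+3))*(1-x1⁻¹*q^(3*k+3))*(1-x2⁻¹*q^(3*k+3))*(1-x3⁻¹*q^(3*k+3))*(1-x4⁻¹*q^(3*k+3))*(1-T*q^(3*k+3)))
      = ((1-q^(3*k+1))*(1-x1*q^(3*k+1))*(1-x2*q^(3*k+1))*(1-x3*q^(3*k+1)) / ((1-q^(3*k+3))*(1-x1⁻¹*q^(3*k+3))*(1-x2⁻¹*q^(3*k+3))*(1-x3⁻¹*q^(3*k+3))))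
       * ((1-T⁻¹*q^(3*k+1)) / (1-x4⁻¹*q^(3*k+3))) * ((1-x4*q^(3*k+1))/(1-T*q^(3*k+3))) := by
      rw [div_mul_div_comm, div_mul_div_comm]; congr 1 <;> ring
    rw [this]
    have t2 : (1-q^(3*j+3)) * (1-x4*q^(3*k+1)) / ((1-x4*T⁻¹*q^(3*j+1))*(1-T*q^(3*k+3))) = ((1-q^(3*j+3)) / (1-x4*T⁻¹*q^(3*j+1))) * ((1-x4*q^(3*k+1))/(1-T*q^(3*k+3))) := by
      rw [div_mul_div_comm]
    rw [t2]
    generalize ((1-q^(3*k+1))*(1-x1*q^(3*k+1))*(1-x2*q^(3*k+1))*(1-x3*q^(3*k+1)) / ((1-q^(3*k+3))*(1-x1⁻¹*q^(3*k+3))*(1-x2⁻¹*q^(3*k+3))*(1-x3⁻¹*q^(3*k+3)))) = Y1 at *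
    generalize ((1-x4*q^(3*k+1))/(1-T*q^(3*k+3))) = Y2 at *
    linear_combination bB L (q*x1) (q*x2) (q*x3) (q^3) k * bV L (q*x1) (q*x2) (q*x3) (q^3) (k+j+1) k * Y1 * Y2 * w
  have ck : ∀ k ≤ m, c 0 * (q^(3*k) * (∏ i ∈ range k, N i)) * (∏ i ∈ Ico k m, D i) = c k * ∏ i ∈ range m, D i := by
    intro k
    induction k with
    | zero => intro _; simp
    | succ k ih =>
      intro hk
      have ih' := ih (by omega)
      rw [Finset.prod_eq_prod_Ico_succ_bot (by omega : k < m)] at ih'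
      rw [cs k (by omega), prod_range_succ]
      have := hD0 k (by omega)
      have e : c k * (q^3 * (N k / D k)) * ∏ i ∈ range m, D i = q^3 * (N k / D k) * (c k * ∏ i ∈ range m, D i) := by ring
      rw [e, ← ih']
      field_simp
      ring
  have hP : c 0 * Pgen q m N D = (∏ i ∈ range m, D i) * ((1-q) * bR L (q*x1) (q*x2) (q*x3) (q^3) m) := by
    rw [← B, Pgen, mul_sum, mul_sum]
    apply sum_congr rfl
    intro k hk
    have := ck k (by have := mem_range.1 hk; omega)
    rw [show 1 - q*(q^3)^(2*k) = 1 - q^(6*k+1) by ring]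
    have hck : c k = bB L (q*x1) (q*x2) (q*x3) (q^3) k * bV L (q*x1) (q*x2) (q*x3) (q^3) m k := rfl
    rw [hck] at this
    linear_combination (1 - q^(6*k+1)) * this
  have hc0 : c 0 ≠ 0 := by
    rw [c0]; exact div_ne_zero (mul_ne_zero n3 n4) (mul_ne_zero n1 n2)
  apply mul_left_cancel₀ hc0
  rw [hP, c0]
  unfold bR
  rw [ea, eb, ec, ed]
  have p1 : pc (q^3) (q^3) m = ∏ i ∈ range m, (1-q^(3*i+3)) := by
    have := pcq 1 3 m; simpa using this
  have p4 : L*(q*x3)*q^3 = x3*x4*T⁻¹*q^2 := by rw [hL]; field_simp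
  have p5 : L*(q*x2)*q^3 = x2*x4*T⁻¹*q^2 := by rw [hL]; field_simp
  have p6 : L*(q*x1)*q^3 = x1*x4*T⁻¹*q^2 := by rw [hL]; field_simp
  have p7 : (1-q) * pc (q*q^3) (q^3) m = (∏ i ∈ range m, (1-q^(3*i+1))) * (1-T) := by
    rw [hT, ← prod_range_succ (fun i => 1 - q^(3*i+1)), prod_range_succ', mul_comm]
    congr 1
    · unfold pc; apply prod_congr rfl; intro i _; ring
    · simp
  have p8 : pc (L*q^3) (q^3) m * (∏ i ∈ range m, (-x4⁻¹*q^(3*i+3))) = ∏ i ∈ range m, (1 - x4⁻¹*q^(3*i+3)) := by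
    rw [eLp, pcq, ← Finset.prod_range_reflect, ← prod_mul_distrib]
    apply prod_congr rfl
    intro i hi
    obtain ⟨l, rfl⟩ : ∃ l, m = i + l + 1 := ⟨m - 1 - i, by have := mem_range.1 hi; omega⟩
    rw [show i + l + 1 - 1 - i = l by omega]
    have : T⁻¹ * q^(3*l+1) * q^(3*i+3) = 1 := by
      rw [mul_assoc, ← pow_add, show 3*l+1+(3*i+3) = 3*(i+l+1)+1 by ring, ← hT]; field_simp
    have h44 : x4 * x4⁻¹ = 1 := mul_inv_cancel₀ h4
    linear_combination x4 * x4⁻¹ * this + h44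
  have p9 : ∏ i ∈ range m, D i = (∏ i ∈ range m, (1-q^(3*i+3))) * (∏ i ∈ range m, (1-x1⁻¹*q^(3*i+3))) * (∏ i ∈ range m, (1-x2⁻¹*q^(3*i+3))) * (∏ i ∈ range m, (1-x3⁻¹*q^(3*i+3))) * (∏ i ∈ range m, (1-x4⁻¹*q^(3*i+3))) * (∏ i ∈ range m, (1-T*q^(3*i+3))) := by
    simp only [hD, prod_mul_distrib]
  have r1 : (∏ i ∈ range m, (1-x1⁻¹*q^(3*i+3))) ≠ 0 := by
    rw [prod_ne_zero_iff]; intro i hi; exact k1 i (mem_range.1 hi)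
  have r2 : (∏ i ∈ range m, (1-x2⁻¹*q^(3*i+3))) ≠ 0 := by
    rw [prod_ne_zero_iff]; intro i hi; exact k2 i (mem_range.1 hi)
  have r3 : (∏ i ∈ range m, (1-x3⁻¹*q^(3*i+3))) ≠ 0 := by
    rw [prod_ne_zero_iff]; intro i hi; exact k3 i (mem_range.1 hi)
  rw [p9, p4, p5, p6, pcq x1⁻¹ 3, pcq x2⁻¹ 3, pcq x3⁻¹ 3, pcq _ 2, pcq _ 2, pcq _ 2, ← p8]
  rw [p1] at n1 ⊢
  generalize (∏ i ∈ range m, (1-x1⁻¹*q^(3*i+3))) = g1 at *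
  generalize (∏ i ∈ range m, (1-x2⁻¹*q^(3*i+3))) = g2 at *
  generalize (∏ i ∈ range m, (1-x3⁻¹*q^(3*i+3))) = g3 at *
  generalize (∏ i ∈ range m, (1-q^(3*i+3))) = g4 at *
  generalize (∏ i ∈ range m, (1-T*q^(3*i+3))) = g5 at *
  generalize (∏ i ∈ range m, (1-x1*x4*T⁻¹*q^(3*i+2))) = g6 at *
  generalize (∏ i ∈ range m, (1-x2*x4*T⁻¹*q^(3*i+2))) = g7 at *
  generalize (∏ i ∈ range m, (1-x3*x4*T⁻¹*q^(3*i+2))) = g8 at *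
  generalize (∏ i ∈ range m, (-x4⁻¹*q^(3*i+3))) = g9 at *
  generalize (∏ i ∈ range m, (1-q^(3*i+1))) = g10 at *
  generalize pc (L*q^3) (q^3) m = a1 at *
  generalize pc (L*q^3*q) (q^3) m = a2 at *
  generalize pc (q*q^3) (q^3) m = a3 at *
  clear B ck cs c0 hP hc0 p9 p8
  clear_value N D L c
  field_simp
  linear_combination g5*g9*g8*g7*g6 * p7

end jack


lemma dvd_prod_sub {R : Type*} [CommRing R] (e : R) (f g : ℕ → R) (n : ℕ) (h : ∀ i, e ∣ f i - g i) :
    e ∣ ∏ i ∈ range n, f i - ∏ i ∈ range n, g i := by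
  induction n with
  | zero => simp
  | succ n ih =>
    rw [prod_range_succ, prod_range_succ]
    obtain ⟨a, ha⟩ := ih
    obtain ⟨b, hb⟩ := h n
    exact ⟨a * f n + (∏ i ∈ range n, g i) * b, by linear_combination f n * ha + (∏ i ∈ range n, g i) * hb⟩

lemma dvd_mul_sub {R : Type*} [CommRing R] (e a b c d : R) (h : e ∣ a - b) (h' : e ∣ c - d) :
    e ∣ a * c - b * d := by
  obtain ⟨x, hx⟩ := h
  obtain ⟨y, hy⟩ := h'
  exact ⟨x * c + b * y, by linear_combination c * hx + b * hy⟩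

lemma pairprod {R : Type*} [CommRing R] (q y : R) (h : ℕ) :
    (∏ i ∈ range h, q^(3*i+3)) * ∏ i ∈ range (2*h+1), (1 - y*q^(3*i+2)) =
      (1 - y*q^(3*h+2)) * ∏ i ∈ range h, ((1 - y*q^(3*h+2)*q^(3*i+3))*(q^(3*i+3) - y*q^(3*h+2))) := by
  rw [show 2*h+1 = h + 1 + h by ring, prod_range_add, prod_range_succ, prod_mul_distrib]
  have e1 : ∏ x ∈ range h, (1 - y*q^(3*(h+1+x)+2)) = ∏ i ∈ range h, (1 - y*q^(3*h+2)*q^(3*i+3)) := by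
    apply prod_congr rfl; intro i _; ring
  have e2 : (∏ i ∈ range h, q^(3*i+3)) * ∏ i ∈ range h, (1 - y*q^(3*i+2)) = ∏ i ∈ range h, (q^(3*i+3) - y*q^(3*h+2)) := by
    rw [← Finset.prod_range_reflect (fun i => 1 - y*q^(3*i+2)), ← prod_mul_distrib]
    apply prod_congr rfl
    intro i hi
    obtain ⟨l, rfl⟩ : ∃ l, h = i + l + 1 := ⟨h - 1 - i, by have := mem_range.1 hi; omega⟩
    rw [show i + l + 1 - 1 - i = l by omega]
    ring
  rw [e1, ← e2]; ring

lemma approxF {R : Type*} [CommRing R] (q e z : R) (h : ℕ) (hz : e ∣ 1 - z) :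
    e^2 ∣ ∏ i ∈ range h, ((1 - z*q^(3*i+3))*(q^(3*i+3) - z)) - (-z)^h * (∏ i ∈ range h, (1-q^(3*i+3)))^2 := by
  have e1 : (-z)^h * (∏ i ∈ range h, (1-q^(3*i+3)))^2 = ∏ i ∈ range h, ((-z) * (1-q^(3*i+3))^2) := by
    rw [prod_mul_distrib, prod_const, card_range, prod_pow]
  rw [e1]
  apply dvd_prod_sub
  intro i
  obtain ⟨a, ha⟩ := hz
  exact ⟨a^2 * q^(3*i+3), by linear_combination q^(3*i+3) * (1 - z + e*a) * ha⟩

lemma approxG {R : Type*} [CommRing R] (q e T : R) (m : ℕ) (hz : e ∣ 1 - T) :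
    e^2 ∣ ∏ i ∈ range m, ((1 - T*q^(3*i+3))*(T - q^(3*i+3))) - T^m * (∏ i ∈ range m, (1-q^(3*i+3)))^2 := by
  have e1 : T^m * (∏ i ∈ range m, (1-q^(3*i+3)))^2 = ∏ i ∈ range m, (T * (1-q^(3*i+3))^2) := by
    rw [prod_mul_distrib, prod_const, card_range, prod_pow]
  rw [e1]
  apply dvd_prod_sub
  intro i
  obtain ⟨a, ha⟩ := hz
  exact ⟨-a^2 * q^(3*i+3), by linear_combination -q^(3*i+3) * (1 - T + e*a) * ha⟩

lemma jackR {R : Type*} [CommRing R] [IsDomain R] (q x1 x2 x3 x4 T : Rˣ) (m : ℕ)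
    (hT : T = q^(3*m+1)) (hx : x1*x2*x3*x4 = T)
    (hqq : ∀ i : ℕ, (1:R) - q^(i+1) ≠ 0)
    (k1 : ∀ i < m, (1:R) - ↑x1⁻¹ * q^(3*i+3) ≠ 0)
    (k2 : ∀ i < m, (1:R) - ↑x2⁻¹ * q^(3*i+3) ≠ 0)
    (k3 : ∀ i < m, (1:R) - ↑x3⁻¹ * q^(3*i+3) ≠ 0)
    (k4 : ∀ i < m, (1:R) - ↑x4⁻¹ * q^(3*i+3) ≠ 0)
    (k5 : ∀ i < m, (1:R) - x4 * ↑T⁻¹ * q^(3*i+2) ≠ 0) :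
    Pgen (q:R) m (fun i => (1-q^(3*i+1))*(1-x1*q^(3*i+1))*(1-x2*q^(3*i+1))*(1-x3*q^(3*i+1))*(1-x4*q^(3*i+1))*(1-↑T⁻¹*q^(3*i+1)))
      (fun i => (1-q^(3*i+3))*(1-↑x1⁻¹*q^(3*i+3))*(1-↑x2⁻¹*q^(3*i+3))*(1-↑x3⁻¹*q^(3*i+3))*(1-↑x4⁻¹*q^(3*i+3))*(1-T*q^(3*i+3)))
    = (∏ i ∈ range m, (1-(q:R)^(3*i+3))) * (∏ i ∈ range m, (1-(T:R)*q^(3*i+3))) *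
      (∏ i ∈ range m, (1-(q:R)^(3*i+1))) * (1-T) * (∏ i ∈ range m, (-(↑x4⁻¹:R)*q^(3*i+3))) *
      (∏ i ∈ range m, (1-(x1:R)*x4*↑T⁻¹*q^(3*i+2))) * (∏ i ∈ range m, (1-(x2:R)*x4*↑T⁻¹*q^(3*i+2)))
      * (∏ i ∈ range m, (1-(x3:R)*x4*↑T⁻¹*q^(3*i+2))) := by
  have inj : Function.Injective (algebraMap R (FractionRing R)) := IsFractionRing.injective R (FractionRing R)
  apply inj
  rw [Pgen_map]
  have u0 : ∀ u : Rˣ, algebraMap R (FractionRing R) u ≠ 0 := fun u => by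
    rw [Ne, map_eq_zero_iff _ inj]; exact u.ne_zero
  have tr : ∀ a : R, a ≠ 0 → algebraMap R (FractionRing R) a ≠ 0 := fun a ha => by
    rwa [Ne, map_eq_zero_iff _ inj]
  have J := jack (algebraMap R (FractionRing R) q) (algebraMap R (FractionRing R) x1) (algebraMap R (FractionRing R) x2)
    (algebraMap R (FractionRing R) x3) (algebraMap R (FractionRing R) x4) (algebraMap R (FractionRing R) T) m
    (u0 _) (u0 _) (u0 _) (u0 _) (u0 _) (by rw [hT]; simp) (by rw [← hx]; simp)
    (fun i => by have := tr _ (hqq i); simpa using this)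
    (fun i hi => by have := tr _ (k1 i hi); simpa [map_units_inv] using this)
    (fun i hi => by have := tr _ (k2 i hi); simpa [map_units_inv] using this)
    (fun i hi => by have := tr _ (k3 i hi); simpa [map_units_inv] using this)
    (fun i hi => by have := tr _ (k4 i hi); simpa [map_units_inv] using this)
    (fun i hi => by have := tr _ (k5 i hi); simpa [map_units_inv] using this)
  simp only [map_mul, map_sub, map_one, map_pow, map_prod, map_neg, map_units_inv] at J ⊢
  exact J

def kap {R : Type*} [CommRing R] (q Q : R) (h : ℕ) : R :=
  (∏ i ∈ range (2*h+1), (1-q^(3*i+3)))^3 * Q^(3*h+2) * (1-Q^2) * (-1)^h * ((∏ i ∈ range h, (1-q^(3*i+3)))^2)^3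

lemma jackcong {R : Type*} [CommRing R] [IsDomain R] (e : R) (q x1 x2 x3 x4 Q : Rˣ) (h : ℕ)
    (hQ : Q = q^(3*h+2)) (hx : x1*x2*x3*x4 = Q^2)
    (hqq : ∀ i : ℕ, (1:R) - q^(i+1) ≠ 0)
    (k1 : ∀ i < 2*h+1, (1:R) - ↑x1⁻¹ * q^(3*i+3) ≠ 0)
    (k2 : ∀ i < 2*h+1, (1:R) - ↑x2⁻¹ * q^(3*i+3) ≠ 0)
    (k3 : ∀ i < 2*h+1, (1:R) - ↑x3⁻¹ * q^(3*i+3) ≠ 0)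
    (k4 : ∀ i < 2*h+1, (1:R) - ↑x4⁻¹ * q^(3*i+3) ≠ 0)
    (k5 : ∀ i < 2*h+1, (1:R) - x4 * ↑(Q^2)⁻¹ * q^(3*i+2) ≠ 0)
    (eQ : e ∣ 1 - (Q:R)) (e1 : e ∣ 1 - (x1:R)) (e2 : e ∣ 1 - (x2:R)) (e3 : e ∣ 1 - (x3:R)) (e4 : e ∣ 1 - (x4:R)) :
    e^6 ∣ (∏ i ∈ range h, (q:R)^(3*i+3))^3 * Pgen (q:R) (2*h+1) (fun i => (1-q^(3*i+1))*(1-x1*q^(3*i+1))*(1-x2*q^(3*i+1))*(1-x3*q^(3*i+1))*(1-x4*q^(3*i+1))*(1-↑(Q^2)⁻¹*q^(3*i+1)))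
      (fun i => (1-q^(3*i+3))*(1-↑x1⁻¹*q^(3*i+3))*(1-↑x2⁻¹*q^(3*i+3))*(1-↑x3⁻¹*q^(3*i+3))*(1-↑x4⁻¹*q^(3*i+3))*(1-↑(Q^2)*q^(3*i+3)))
      - kap (q:R) Q h * (((↑x1⁻¹:R)+↑x2⁻¹+↑x3⁻¹+↑x4⁻¹) - ↑Q⁻¹*((x1:R)+x2+x3+x4)) := by
  rw [jackR q x1 x2 x3 x4 (Q^2) (2*h+1) (by rw [hQ]; group) hx hqq k1 k2 k3 k4 k5]
  have hW : (Q:R) * ↑Q⁻¹ = 1 := Q.mul_inv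
  have h4 : (x4:R) * ↑x4⁻¹ = 1 := x4.mul_inv
  have hxx : (x1:R)*x2*x3*x4 = (Q:R)^2 := by exact_mod_cast congrArg Units.val hx
  have hT2 : (↑(Q^2)⁻¹ : R) = (↑Q⁻¹:R)^2 := by simp
  have hT1 : (↑(Q^2) : R) = (Q:R)^2 := by simp
  rw [hT2, hT1]
  have hQ' : (Q:R) = (q:R)^(3*h+2) := by rw [hQ]; simp
  set W : R := ↑Q⁻¹ with hWd
  have P1 := pairprod (q:R) (x1*x4*W^2) h
  have P2 := pairprod (q:R) (x2*x4*W^2) h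
  have P3 := pairprod (q:R) (x3*x4*W^2) h
  rw [← hQ'] at P1 P2 P3
  have zz : ∀ a : R, a*W^2*Q = a * W := fun a => by linear_combination a*W*hW
  simp only [zz] at P1 P2 P3
  have dW : e ∣ 1 - W := by
    obtain ⟨a, ha⟩ := eQ
    exact ⟨-W*a, by linear_combination -W * ha - hW⟩
  have d1 : ∀ a : R, e ∣ 1 - a → e ∣ 1 - a*x4*W := by
    intro a ha
    have := dvd_mul_sub e _ _ _ _ (dvd_mul_sub e _ _ _ _ ha e4) dW
    simpa using this
  have dz1 := d1 x1 e1
  have dz2 := d1 x2 e2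
  have dz3 := d1 x3 e3
  have dT : e ∣ 1 - (Q:R)^2 := by
    have := dvd_mul_sub e _ _ _ _ eQ eQ
    simpa [pow_two] using this
  have hG : (∏ i ∈ range (2*h+1), (1-(Q:R)^2*q^(3*i+3))) * (∏ i ∈ range (2*h+1), (1-(q:R)^(3*i+1))) * (∏ i ∈ range (2*h+1), (-(↑x4⁻¹:R)*q^(3*i+3)))
     = (↑x4⁻¹:R)^(2*h+1) * ∏ i ∈ range (2*h+1), ((1 - (Q:R)^2*q^(3*i+3))*((Q:R)^2 - q^(3*i+3))) := by
    have : (↑x4⁻¹:R)^(2*h+1) = ∏ i ∈ range (2*h+1), (↑x4⁻¹:R) := by simp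
    rw [this, ← Finset.prod_range_reflect (fun i => 1-(q:R)^(3*i+1)), ← prod_mul_distrib, ← prod_mul_distrib, ← prod_mul_distrib]
    apply prod_congr rfl
    intro i hi
    have hi' := mem_range.1 hi
    obtain ⟨l, hl⟩ : ∃ l, 2*h+1 = i + l + 1 := ⟨2*h+1 - 1 - i, by omega⟩
    rw [show 2*h + 1 - 1 - i = l by omega]
    have : (Q:R)^2 = (q:R)^(3*l+1) * q^(3*i+3) := by
      rw [hQ', ← pow_mul, ← pow_add]; congr 1; omega
    rw [this]; ring
  have aG := approxG (q:R) e ((Q:R)^2) (2*h+1) dT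
  have a1 := approxF (q:R) e (x1*x4*W) h dz1
  have a2 := approxF (q:R) e (x2*x4*W) h dz2
  have a3 := approxF (q:R) e (x3*x4*W) h dz3
  have aa := dvd_mul_sub _ _ _ _ _ (dvd_mul_sub _ _ _ _ _ (dvd_mul_sub _ _ _ _ _ aG a1) a2) a3
  have b4 : e^4 ∣ (1-(Q:R)^2)*((1-x1*x4*W)*(1-x2*x4*W)*(1-x3*x4*W)) := by
    have := mul_dvd_mul (mul_dvd_mul (mul_dvd_mul dT dz1) dz2) dz3
    convert this using 1 <;> ring
  have fin := mul_dvd_mul b4 aa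
  rw [← pow_add] at fin
  have fin2 := Dvd.dvd.mul_left fin ((∏ i ∈ range (2*h+1), (1-(q:R)^(3*i+3))) * (↑x4⁻¹:R)^(2*h+1))
  have I1 : (↑x4⁻¹:R) * ((1-x1*x4*W)*(1-x2*x4*W)*(1-x3*x4*W)) = ((↑x1⁻¹:R)+↑x2⁻¹+↑x3⁻¹+↑x4⁻¹) - W*((x1:R)+x2+x3+x4) := by
    have hp : (x1:R)*x2*x3*x4*W^2 = 1 := by rw [hxx]; linear_combination (Q*W+1)*hW
    have i1 : (↑x1⁻¹:R) = x2*x3*x4*W^2 := by linear_combination (-(↑x1⁻¹:R))*hp + (x2*x3*x4*W^2)*x1.mul_inv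
    have i2 : (↑x2⁻¹:R) = x1*x3*x4*W^2 := by linear_combination (-(↑x2⁻¹:R))*hp + (x1*x3*x4*W^2)*x2.mul_inv
    have i3 : (↑x3⁻¹:R) = x1*x2*x4*W^2 := by linear_combination (-(↑x3⁻¹:R))*hp + (x1*x2*x4*W^2)*x3.mul_inv
    have i4 : (↑x4⁻¹:R) = x1*x2*x3*W^2 := by linear_combination (-(↑x4⁻¹:R))*hp + (x1*x2*x3*W^2)*x4.mul_inv
    rw [i1, i2, i3, i4]
    generalize (x1:R) = y1 at *
    generalize (x2:R) = y2 at *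
    generalize (x3:R) = y3 at *
    generalize (x4:R) = y4 at *
    linear_combination (-W*(y1+y2+y3) + W^2*y4*(y1*y2+y1*y3+y2*y3) - y4*W*(y1*y2*y3*y4*W^2+1)) * hp
  have K1 : (↑x4⁻¹:R)^(2*h+1) * ((Q:R)^2)^(2*h+1) * (-(x1*x4*W))^h * (-(x2*x4*W))^h * (-(x3*x4*W))^h = (↑x4⁻¹:R) * (Q:R)^(3*h+2) * (-1)^h := by
    have t1 : (-(x1*x4*W))^h * (-(x2*x4*W))^h * (-(x3*x4*W))^h = (-1)^h * (x4:R)^(2*h) * W^h := by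
      rw [← mul_pow, ← mul_pow, pow_mul, ← mul_pow, ← mul_pow]
      congr 1
      have hp : (x1:R)*x2*x3*x4*W^2 = 1 := by rw [hxx]; linear_combination (Q*W+1)*hW
      linear_combination (-(x4:R)^2*W)*hp
    have t2 : (x4:R)^(2*h) * (↑x4⁻¹:R)^(2*h) = 1 := by rw [← mul_pow, h4, one_pow]
    have t3 : (Q:R)^h * W^h = 1 := by rw [← mul_pow, hW, one_pow]
    have t4 : ((Q:R)^2)^(2*h+1) = Q^(3*h+2) * Q^h := by ring
    rw [mul_assoc, mul_assoc, ← mul_assoc (_^h), t1, t4, pow_succ]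
    linear_combination ((↑x4⁻¹:R) * Q^(3*h+2) * (-1)^h * Q^h * W^h) * t2 + ((↑x4⁻¹:R) * Q^(3*h+2) * (-1)^h) * t3
  refine dvd_trans (dvd_of_eq (by norm_num)) (dvd_trans fin2 (dvd_of_eq ?_))
  unfold kap
  rw [← I1]
  generalize ∏ i ∈ range h, ((1 - x1*x4*W*(q:R)^(3*i+3))*(q^(3*i+3) - x1*x4*W)) = F1 at *
  generalize ∏ i ∈ range h, ((1 - x2*x4*W*(q:R)^(3*i+3))*(q^(3*i+3) - x2*x4*W)) = F2 at *
  generalize ∏ i ∈ range h, ((1 - x3*x4*W*(q:R)^(3*i+3))*(q^(3*i+3) - x3*x4*W)) = F3 at *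
  generalize ∏ i ∈ range (2*h+1), ((1 - (Q:R)^2*q^(3*i+3))*((Q:R)^2 - q^(3*i+3))) = GG at *
  generalize ∏ i ∈ range (2*h+1), (1-(q:R)^(3*i+3)) = pm at *
  generalize ∏ i ∈ range h, (1-(q:R)^(3*i+3)) = ph at *
  generalize ∏ i ∈ range h, (q:R)^(3*i+3) = Pi at *
  generalize ∏ i ∈ range (2*h+1), (1-x1*x4*W^2*(q:R)^(3*i+2)) = E1 at *
  generalize ∏ i ∈ range (2*h+1), (1-x2*x4*W^2*(q:R)^(3*i+2)) = E2 at *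
  generalize ∏ i ∈ range (2*h+1), (1-x3*x4*W^2*(q:R)^(3*i+2)) = E3 at *
  generalize ∏ i ∈ range (2*h+1), (1-(Q:R)^2*(q:R)^(3*i+3)) = H1 at *
  generalize ∏ i ∈ range (2*h+1), (1-(q:R)^(3*i+1)) = H2 at *
  generalize ∏ i ∈ range (2*h+1), (-(↑x4⁻¹:R)*(q:R)^(3*i+3)) = H3 at *
  have e5 : Pi^3 * (pm*H1*H2*(1-(Q:R)^2)*H3*E1*E2*E3) = pm*(1-(Q:R)^2)*(H1*H2*H3)*(Pi*E1)*(Pi*E2)*(Pi*E3) := by ring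
  rw [e5, hG, P1, P2, P3]
  linear_combination (-pm^3 * ph^6 * (1-(Q:R)^2)*((1-x1*x4*W)*(1-x2*x4*W)*(1-x3*x4*W))) * K1


lemma newton {R : Type*} [CommRing R] [IsDomain R] (e : R) (he : e ≠ 0) (l : List R) : ∀ (E : Polynomial R) (r : R),
    l.Pairwise (fun a b => ∃ u : Rˣ, b - a = e * u) → (∀ a ∈ l, e ∣ r - a) →
    (∀ a ∈ l, e^l.length ∣ E.eval a) → e^l.length ∣ E.eval r := by
  induction l with
  | nil => intro E r _ _ _; simp
  | cons a l ih =>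
    intro E r hp hr hE
    rw [List.pairwise_cons] at hp
    have key : ∀ s, E.eval s = (s - a) * (E /ₘ (Polynomial.X - Polynomial.C a)).eval s + E.eval a := by
      intro s
      conv_lhs => rw [← Polynomial.modByMonic_add_div E (Polynomial.X - Polynomial.C a), Polynomial.modByMonic_X_sub_C_eq_C_eval]
      simp; ring
    have hEa := hE a (by simp)
    simp only [List.length_cons] at hE hEa ⊢
    rw [key]
    refine dvd_add ?_ hEa
    rw [pow_succ']
    apply mul_dvd_mul (hr a (by simp))
    apply ih _ _ hp.2 (fun b hb => hr b (by simp [hb]))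
    intro b hb
    obtain ⟨u, hu⟩ := hp.1 b hb
    have h1 := dvd_sub (hE b (by simp [hb])) hEa
    have h2 : E.eval b - E.eval a = e * (u * (E /ₘ (Polynomial.X - Polynomial.C a)).eval b) := by
      rw [key b, hu]; ring
    rw [h2, pow_succ', mul_dvd_mul_iff_left he] at h1
    simpa using h1

abbrev RR := PowerSeries ℂ

lemma RR_isUnit (f : RR) (h : PowerSeries.constantCoeff f ≠ 0) : IsUnit f := by
  rw [PowerSeries.isUnit_iff_constantCoeff]; exact isUnit_iff_ne_zero.2 h

noncomputable def ww : RRˣ := (RR_isUnit (1 + PowerSeries.X) (by simp)).unit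

lemma ww_val : (ww : RR) = 1 + PowerSeries.X := rfl

noncomputable def zz0 (z : ℂˣ) : RRˣ := Units.map (PowerSeries.C : ℂ →+* RR).toMonoidHom z

lemma zz0_val (z : ℂˣ) : (zz0 z : RR) = PowerSeries.C (z:ℂ) := rfl

lemma zz0_inv (z : ℂˣ) : ((zz0 z)⁻¹ : RRˣ) = zz0 (z⁻¹) := by simp [zz0]
lemma zz0_zpow (z : ℂˣ) (k : ℤ) : ((zz0 z)^k : RRˣ) = zz0 (z^k) := by simp [zz0]
lemma zz0_pow (z : ℂˣ) (k : ℕ) : ((zz0 z)^k : RRˣ) = zz0 (z^k) := by simp [zz0]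
lemma zz0_one : zz0 1 = 1 := by simp [zz0]

lemma cc_ww (k : ℤ) : PowerSeries.constantCoeff ((ww^k : RRˣ) : RR) = 1 := by
  have h : Units.map (PowerSeries.constantCoeff : RR →+* ℂ).toMonoidHom ww = 1 := by
    ext; simp [ww_val]
  have := congrArg (fun u : ℂˣ => ((u^k : ℂˣ) : ℂ)) h
  simp only [← map_zpow, one_zpow, Units.val_one] at this
  exact this

lemma ww_nat (k : ℕ) (hk : 0 < k) : ∃ u : RRˣ, (ww:RR)^k - 1 = PowerSeries.X * (u:RR) := by
  have h : IsUnit (∑ i ∈ range k, (1 + PowerSeries.X : RR)^i) := by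
    apply RR_isUnit
    simp
    omega
  refine ⟨h.unit, ?_⟩
  rw [IsUnit.unit_spec, ww_val, mul_comm]
  have := geom_sum_mul (1 + PowerSeries.X : RR) k
  rw [← this]; ring

lemma ww_int (k : ℤ) (hk : k ≠ 0) : ∃ u : RRˣ, ((ww^k : RRˣ):RR) - 1 = PowerSeries.X * (u:RR) := by
  rcases lt_or_gt_of_ne hk with h | h
  · obtain ⟨u, hu⟩ := ww_nat (-k).toNat (by omega)
    refine ⟨-(ww^k * u), ?_⟩
    have e : (ww:RR)^((-k).toNat) * ((ww^k : RRˣ):RR) = 1 := by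
      rw [← Units.val_pow_eq_pow_val, ← Units.val_mul, ← zpow_natCast, ← zpow_add]
      rw [show (((-k).toNat:ℕ):ℤ) + k = 0 by omega]; simp
    push_cast
    linear_combination (- ((ww^k : RRˣ):RR)) * hu + e
  · obtain ⟨u, hu⟩ := ww_nat k.toNat (by omega)
    refine ⟨u, ?_⟩
    rw [← hu, ← Units.val_pow_eq_pow_val, ← zpow_natCast, Int.toNat_of_nonneg (by omega)]

lemma ww_sub (a b : ℤ) (hk : a ≠ b) : ∃ u : RRˣ, ((ww^a : RRˣ):RR) - ((ww^b : RRˣ):RR) = PowerSeries.X * (u:RR) := by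
  obtain ⟨u, hu⟩ := ww_int (a-b) (by omega)
  refine ⟨ww^b * u, ?_⟩
  have : ww^a = ww^(a-b) * ww^b := by rw [← zpow_add]; congr 1; ring
  rw [this]
  push_cast
  linear_combination ((ww^b : RRˣ):RR) * hu

lemma ww_dvd (k : ℤ) : (PowerSeries.X : RR) ∣ 1 - ((ww^k : RRˣ):RR) := by
  rw [PowerSeries.X_dvd_iff]; simp [cc_ww]

lemma nz (z : ℂˣ) (k : ℤ) (h : z ≠ 1 ∨ k ≠ 0) : (1:RR) - ((zz0 z * ww^k : RRˣ) : RR) ≠ 0 := by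
  by_cases hz : z = 1
  · obtain ⟨u, hu⟩ := ww_int k (by tauto)
    rw [hz, zz0_one, one_mul, ← neg_sub, hu, neg_ne_zero]
    exact mul_ne_zero PowerSeries.X_ne_zero u.ne_zero
  · intro h0
    have := congrArg PowerSeries.constantCoeff h0
    rw [Units.val_mul, map_sub, map_mul, cc_ww, zz0_val] at this
    simp at this
    apply hz; apply Units.ext; rw [Units.val_one]; linear_combination -this


section P5
variable {A B : Type*} [CommRing A] [CommRing B]

def Np (s e : A) : A := (1-e)*(1-s*e)*(1-s^2*e)*(1-s^3*e)*(s^2-e)*(s^4-e)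
def Dp (s e : A) : A := (1-e)*(s-e)*(s^2-e)*(s^3-e)*(1-s^2*e)*(1-s^4*e)
def PP (q s : A) (m : ℕ) : A := Pgen q m (fun i => Np s (q^(3*i+1))) (fun i => Dp s (q^(3*i+3)))
def JJ (Q W s : A) : A := (s^3+s^2+s+s^6+s^8) - W*(s^5+s^6+s^7+s^2+1) + (W^3-Q^2)*s^4
def Dd (q Q W s : A) (h : ℕ) : A :=
  (∏ i ∈ range h, q^(3*i+3))^3 * s^4 * PP q s (2*h+1) - kap q Q h * s^(6*(2*h+1)) * JJ Q W s

lemma PP_map (f : A →+* B) (q s : A) (m : ℕ) : f (PP q s m) = PP (f q) (f s) m := by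
  unfold PP
  rw [Pgen_map]
  simp [Np, Dp]

lemma Dd_map (f : A →+* B) (q Q W s : A) (h : ℕ) : f (Dd q Q W s h) = Dd (f q) (f Q) (f W) (f s) h := by
  unfold Dd
  rw [map_sub, map_mul, map_mul, map_mul, map_mul, PP_map]
  simp [kap, JJ, map_prod]

lemma PP_zero (h2 : ∀ x : A, x = -x → x = 0) (q s : A) (m : ℕ) (hq : q^(3*m+1) = 1) : PP q s m = 0 := by
  apply Pgen_zero h2 q m hq
  intro i l hil
  have h1 : q^(3*l+1) * q^(3*i+3) = 1 := by
    rw [← pow_add, ← hq]; congr 1; omega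
  rw [show 18*(i+1) = (3*i+3)*6 by ring, pow_mul]
  generalize q^(3*l+1) = x at *
  generalize q^(3*i+3) = y at *
  unfold Np Dp
  have : y^6 * ((1-x)*(1-s*x)*(1-s^2*x)*(1-s^3*x)*(s^2-x)*(s^4-x)) = (y-x*y)*(y-s*(x*y))*(y-s^2*(x*y))*(y-s^3*(x*y))*(s^2*y-x*y)*(s^4*y-x*y) := by ring
  rw [this, h1]; ring

def FF (q Q W : A) (h : ℕ) (y1 y2 y3 y4 y5 z1 z2 z3 z4 z5 : A) : A :=
  (∏ i ∈ range h, q^(3*i+3))^3 * Pgen q (2*h+1)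
    (fun i => (1-q^(3*i+1))*(1-y1*q^(3*i+1))*(1-y2*q^(3*i+1))*(1-y3*q^(3*i+1))*(1-y4*q^(3*i+1))*(1-y5*q^(3*i+1)))
    (fun i => (1-q^(3*i+3))*(1-z1*q^(3*i+3))*(1-z2*q^(3*i+3))*(1-z3*q^(3*i+3))*(1-z4*q^(3*i+3))*(1-z5*q^(3*i+3)))
  - kap q Q h * ((z1+z2+z3+z4+z5) - W*(y1+y2+y3+y4+y5) - Q^2+W^3)

lemma FF_s (q Q W s t : A) (h : ℕ) (hst : s*t = 1) :
    Dd q Q W s h = s^(6*(2*h+1)) * s^4 * FF q Q W h s (s^2) (s^3) (t^2) (t^4) t (t^2) (t^3) (s^2) (s^4) := by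
  have e : PP q s (2*h+1) = (s^6)^(2*h+1) * Pgen q (2*h+1)
    (fun i => (1-q^(3*i+1))*(1-s*q^(3*i+1))*(1-s^2*q^(3*i+1))*(1-s^3*q^(3*i+1))*(1-t^2*q^(3*i+1))*(1-t^4*q^(3*i+1)))
    (fun i => (1-q^(3*i+3))*(1-t*q^(3*i+3))*(1-t^2*q^(3*i+3))*(1-t^3*q^(3*i+3))*(1-s^2*q^(3*i+3))*(1-s^4*q^(3*i+3))) := by
    rw [← Pgen_scale]
    apply Pgen_congr
    · intro i
      generalize q^(3*i+1) = x
      have e2 : s^2 - x = s^2*(1-t^2*x) := by linear_combination (s*t+1)*x*hst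
      have e4 : s^4 - x = s^4*(1-t^4*x) := by linear_combination (s^3*t^3+s^2*t^2+s*t+1)*x*hst
      unfold Np; rw [e2, e4]; ring
    · intro i
      generalize q^(3*i+3) = x
      have e1 : s - x = s*(1-t*x) := by linear_combination x*hst
      have e2 : s^2 - x = s^2*(1-t^2*x) := by linear_combination (s*t+1)*x*hst
      have e3 : s^3 - x = s^3*(1-t^3*x) := by linear_combination (s^2*t^2+s*t+1)*x*hst
      unfold Dp; rw [e1, e2, e3]; ring
  have j : JJ Q W s = s^4 * ((t+t^2+t^3+s^2+s^4) - W*(s+s^2+s^3+t^2+t^4) - Q^2+W^3) := by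
    have f1 : s^4*t = s^3 := by linear_combination s^3*hst
    have f2 : s^4*t^2 = s^2 := by linear_combination s^2*(s*t+1)*hst
    have f3 : s^4*t^3 = s := by linear_combination s*(s^2*t^2+s*t+1)*hst
    have f4 : s^4*t^4 = 1 := by linear_combination (s^3*t^3+s^2*t^2+s*t+1)*hst
    unfold JJ
    linear_combination -f1 -(1-W)*f2 -f3 + W*f4
  unfold Dd FF
  rw [e, j, ← pow_mul]
  ring
end P5

noncomputable def qh (z : ℂˣ) : RRˣ := zz0 z * ww^(6:ℤ)

lemma qh_pow (z : ℂˣ) (k : ℕ) : qh z ^ k = zz0 (z^k) * ww^(6*k:ℤ) := by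
  unfold qh; rw [mul_pow, zz0_pow, zpow_mul, zpow_natCast]

lemma FF_w (h : ℕ) (z : ℂˣ) (hz : IsPrimitiveRoot z (3*h+2)) (a1 a2 a3 a4 : ℤ)
    (ha : a1+a2+a3+a4 = 12*(3*h+2)) (h4 : a4 ≠ 6*(3*h+2)) :
    (PowerSeries.X : RR)^6 ∣ FF (qh z : RR) ((ww^(6*(3*h+2):ℤ) : RRˣ):RR) ((ww^(-(6*(3*h+2)):ℤ) : RRˣ):RR) h
      ((ww^a1 : RRˣ):RR) ((ww^a2 : RRˣ):RR) ((ww^a3 : RRˣ):RR) ((ww^a4 : RRˣ):RR) ((ww^(-(12*(3*h+2)):ℤ) : RRˣ):RR)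
      ((ww^(-a1) : RRˣ):RR) ((ww^(-a2) : RRˣ):RR) ((ww^(-a3) : RRˣ):RR) ((ww^(-a4) : RRˣ):RR) ((ww^((12*(3*h+2)):ℤ) : RRˣ):RR) := by
  have hne : ∀ i < 2*h+1, z^(3*i+3) ≠ 1 := by
    intro i hi h0
    have h1 := (hz.pow_eq_one_iff_dvd _).1 h0
    have h2 : 3*h+2 ∣ i+1 := by
      have : Nat.Coprime (3*h+2) 3 := by
        rw [Nat.coprime_comm, Nat.Prime.coprime_iff_not_dvd Nat.prime_three]; omega
      apply this.dvd_of_dvd_mul_left; convert h1 using 1; ring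
    have := Nat.le_of_dvd (by omega) h2
    omega
  have hk : ∀ a : ℤ, ∀ i < 2*h+1, (1:RR) - ↑((ww^a)⁻¹ : RRˣ) * (qh z : RR)^(3*i+3) ≠ 0 := by
    intro a i hi
    have := nz (z^(3*i+3)) (-a + 6*(3*i+3:ℕ)) (Or.inl (hne i hi))
    rw [← Units.val_pow_eq_pow_val, ← Units.val_mul, qh_pow]
    rw [zpow_add, zpow_neg] at this
    rwa [mul_left_comm]
  have hQ : (ww^(6*(3*h+2):ℤ) : RRˣ) = qh z ^(3*h+2) := by
    rw [qh_pow, hz.pow_eq_one, zz0_one, one_mul]; push_cast; rfl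
  have J := jackcong (PowerSeries.X : RR) (qh z) (ww^a1) (ww^a2) (ww^a3) (ww^a4) (ww^(6*(3*h+2):ℤ)) h
    hQ (by rw [← zpow_add, ← zpow_add, ← zpow_add, ha, ← zpow_natCast, ← zpow_mul]; congr 1; push_cast; ring)
    (by
      intro i
      rw [← Units.val_pow_eq_pow_val, qh_pow]
      exact nz _ _ (Or.inr (by push_cast; omega)))
    (hk a1) (hk a2) (hk a3) (hk a4)
    (by
      intro i hi
      have := nz (z^(3*i+2)) (a4 - 12*(3*h+2) + 6*(3*i+2:ℕ)) (by
        by_cases hzz : z^(3*i+2) = 1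
        · right
          have h1 := (hz.pow_eq_one_iff_dvd _).1 hzz
          obtain ⟨c, hc⟩ := h1
          have : c = 1 := by
            rcases c with _ | _ | c
            · omega
            · rfl
            · exfalso; nlinarith
          subst this
          push_cast; omega
        · left; exact hzz)
      rw [← Units.val_pow_eq_pow_val, ← Units.val_mul, ← Units.val_mul, qh_pow]
      rw [zpow_add, zpow_sub] at this
      convert this using 3
      rw [mul_left_comm]
      congr 3
      rw [← zpow_natCast, ← zpow_mul]; congr 2; push_cast; ring)
    (ww_dvd _) (ww_dvd _) (ww_dvd _) (ww_dvd _) (ww_dvd _)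
  have e1 : ((ww^(6*(3*h+2):ℤ))^2 : RRˣ) = ww^((12*(3*h+2)):ℤ) := by
    rw [← zpow_natCast, ← zpow_mul]; congr 1; push_cast; ring
  rw [e1] at J
  simp only [← zpow_neg] at J
  unfold FF
  convert J using 3
  have e2 : ((ww^((12*(3*h+2)):ℤ) : RRˣ):RR) = ((ww^(6*(3*h+2):ℤ) : RRˣ):RR)^2 := by
    rw [← e1]; rfl
  have e3 : ((ww^(-(12*(3*h+2)):ℤ) : RRˣ):RR) = ((ww^(-(6*(3*h+2)):ℤ) : RRˣ):RR)^2 := by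
    rw [zpow_neg, ← e1, zpow_neg, ← inv_pow]; rfl
  rw [e2, e3]; ring

lemma FF_perm1 {A : Type*} [CommRing A] (q Q W : A) (h : ℕ) (y1 y2 y3 y4 y5 z1 z2 z3 z4 z5 : A) :
    FF q Q W h y1 y2 y3 y4 y5 z1 z2 z3 z4 z5 = FF q Q W h y2 y3 y4 y5 y1 z2 z3 z4 z5 z1 := by
  unfold FF
  congr 1
  · congr 1; apply Pgen_congr <;> intro i <;> ring
  · ring

lemma FF_w' (h : ℕ) (z : ℂˣ) (hz : IsPrimitiveRoot z (3*h+2)) (a1 a2 a3 a4 a5 : ℤ)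
    (ha : a1+a2+a3+a4 = 12*(3*h+2)) (h4 : a4 ≠ 6*(3*h+2)) (h5 : a5 = -(12*(3*h+2))) :
    (PowerSeries.X : RR)^6 ∣ FF (qh z : RR) ((ww^(6*(3*h+2):ℤ) : RRˣ):RR) ((ww^(-(6*(3*h+2)):ℤ) : RRˣ):RR) h
      ((ww^a1 : RRˣ):RR) ((ww^a2 : RRˣ):RR) ((ww^a3 : RRˣ):RR) ((ww^a4 : RRˣ):RR) ((ww^a5 : RRˣ):RR)
      ((ww^(-a1) : RRˣ):RR) ((ww^(-a2) : RRˣ):RR) ((ww^(-a3) : RRˣ):RR) ((ww^(-a4) : RRˣ):RR) ((ww^(-a5) : RRˣ):RR) := by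
  have := FF_w h z hz a1 a2 a3 a4 ha h4
  rw [h5, neg_neg]; exact this

lemma Dd_w (h : ℕ) (z : ℂˣ) (hz : IsPrimitiveRoot z (3*h+2)) (a : ℤ)
    (ha : a = -12*(3*h+2) ∨ a = -6*(3*h+2) ∨ a = -4*(3*h+2) ∨ a = 6*(3*h+2) ∨ a = 3*(3*h+2)) :
    (PowerSeries.X : RR)^6 ∣ Dd (qh z : RR) ((ww^(6*(3*h+2):ℤ) : RRˣ):RR) ((ww^(-(6*(3*h+2)):ℤ) : RRˣ):RR) ((ww^a : RRˣ):RR) h := by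
  rw [FF_s _ _ _ _ (((ww^a)⁻¹ : RRˣ):RR) h (Units.mul_inv _)]
  apply Dvd.dvd.mul_left
  have f : ∀ k : ℕ, ((ww^a : RRˣ):RR)^k = ((ww^(a*k) : RRˣ):RR) := by
    intro k; rw [← Units.val_pow_eq_pow_val, zpow_mul, zpow_natCast]
  have f' : ∀ k : ℕ, (((ww^a)⁻¹ : RRˣ):RR)^k = ((ww^(-(a*k)) : RRˣ):RR) := by
    intro k; rw [← Units.val_pow_eq_pow_val, zpow_neg, zpow_mul, zpow_natCast, inv_pow]
  have f2 := f' 2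
  have f4 := f' 4
  have g2 : ((ww^a : RRˣ):RR)^2 = ((ww^(-(-(a*2))) : RRˣ):RR) := by rw [f, neg_neg]; rfl
  have g4 : ((ww^a : RRˣ):RR)^4 = ((ww^(-(-(a*4))) : RRˣ):RR) := by rw [f, neg_neg]; rfl
  have key : (PowerSeries.X : RR)^6 ∣ FF (qh z : RR) ((ww^(6*(3*h+2):ℤ) : RRˣ):RR) ((ww^(-(6*(3*h+2)):ℤ) : RRˣ):RR) h
      ((ww^a : RRˣ):RR) ((ww^(a*2) : RRˣ):RR) ((ww^(a*3) : RRˣ):RR) ((ww^(-(a*2)) : RRˣ):RR) ((ww^(-(a*4)) : RRˣ):RR)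
      ((ww^(-a) : RRˣ):RR) ((ww^(-(a*2)) : RRˣ):RR) ((ww^(-(a*3)) : RRˣ):RR) ((ww^(-(-(a*2))) : RRˣ):RR) ((ww^(-(-(a*4))) : RRˣ):RR) := by
    have H := FF_w' h z hz
    rcases ha with rfl | rfl | rfl | rfl | rfl
    · rw [FF_perm1]
      exact H _ _ _ _ _ (by ring) (by omega) (by ring)
    · rw [FF_perm1, FF_perm1]
      exact H _ _ _ _ _ (by ring) (by omega) (by ring)
    · rw [FF_perm1, FF_perm1, FF_perm1]
      exact H _ _ _ _ _ (by ring) (by omega) (by ring)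
    · rw [FF_perm1, FF_perm1, FF_perm1, FF_perm1]
      exact H _ _ _ _ _ (by ring) (by omega) (by ring)
    · exact H _ _ _ _ _ (by ring) (by omega) (by ring)
  convert key using 2
  · exact f 2
  · exact f 3
  · exact f' 2
  · exact f' 4
  · rw [zpow_neg]
  · exact f' 2
  · exact f' 3

lemma Dd_one (h : ℕ) (z : ℂˣ) (hz : IsPrimitiveRoot z (3*h+2)) :
    (PowerSeries.X : RR)^6 ∣ Dd (qh z : RR) ((ww^(6*(3*h+2):ℤ) : RRˣ):RR) ((ww^(-(6*(3*h+2)):ℤ) : RRˣ):RR) 1 h := by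
  set Q : RR := ((ww^(6*(3*h+2):ℤ) : RRˣ):RR) with hQ
  set W : RR := ((ww^(-(6*(3*h+2)):ℤ) : RRˣ):RR) with hW
  have cQ : PowerSeries.constantCoeff Q = 1 := cc_ww _
  set P : Polynomial RR := Dd (Polynomial.C (qh z:RR)) (Polynomial.C Q) (Polynomial.C W) Polynomial.X h with hP
  have hev : ∀ r, P.eval r = Dd (qh z : RR) Q W r h := by
    intro r
    rw [← Polynomial.coe_evalRingHom, hP, Dd_map]
    simp
  have hdiv : Polynomial.C (PowerSeries.X : RR) ∣ P := by
    rw [Polynomial.C_dvd_iff_dvd_coeff]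
    intro i
    rw [PowerSeries.X_dvd_iff]
    have : P.map PowerSeries.constantCoeff = 0 := by
      rw [← Polynomial.coe_mapRingHom, hP, Dd_map]
      simp only [Polynomial.coe_mapRingHom, Polynomial.map_C, Polynomial.map_X, cQ]
      unfold Dd
      rw [PP_zero]
      · simp [kap]
      · intro x hx
        exact self_eq_neg.1 hx
      · rw [← Polynomial.C_pow, ← map_pow, ← Units.val_pow_eq_pow_val, qh_pow, Units.val_mul, map_mul, cc_ww,
          show 3*(2*h+1)+1 = (3*h+2)*2 by ring, pow_mul, hz.pow_eq_one, one_pow, zz0_one]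
        simp
    rw [← Polynomial.coeff_map, this]; simp
  obtain ⟨E, hE⟩ := hdiv
  have X0 : (PowerSeries.X : RR) ≠ 0 := PowerSeries.X_ne_zero
  have hPe : ∀ r, P.eval r = PowerSeries.X * E.eval r := by intro r; rw [hE]; simp
  have N := newton (PowerSeries.X : RR) X0
    (([-12*(3*h+2), -6*(3*h+2), -4*(3*h+2), 6*(3*h+2), 3*(3*h+2)] : List ℤ).map (fun a : ℤ => ((ww^a : RRˣ):RR))) E 1
    (by
      rw [List.pairwise_map]
      have : ∀ a b : ℤ, a ≠ b → ∃ u : RRˣ, ((ww^b : RRˣ):RR) - ((ww^a : RRˣ):RR) = PowerSeries.X * (u:RR) := fun a b hab => ww_sub b a hab.symm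
      refine List.Pairwise.imp (fun {a b} hab => this a b hab) ?_
      simp only [List.pairwise_cons, List.mem_cons, forall_eq_or_imp]
      simp
      omega)
    (by
      intro a ha
      obtain ⟨b, _, rfl⟩ := List.mem_map.1 ha
      exact ww_dvd b)
    (by
      intro a ha
      obtain ⟨b, hb, rfl⟩ := List.mem_map.1 ha
      have := Dd_w h z hz b (by simpa using hb)
      rw [← hQ, ← hW, ← hev, hPe, show 6 = 5+1 from rfl, pow_succ', mul_dvd_mul_iff_left X0] at this
      simpa using this)
  rw [← hev, hPe, show 6 = 5+1 from rfl, pow_succ']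
  exact mul_dvd_mul_left _ (by simpa using N)

lemma main_n (h : ℕ) (z : ℂˣ) (hz : IsPrimitiveRoot z (3*h+2)) :
    (PowerSeries.X : RR)^6 ∣ Pgen (qh z : RR) (2*h+1) (fun i => (1-(qh z:RR)^(3*i+1))^6) (fun i => (1-(qh z:RR)^(3*i+3))^6)
     - 5 * (1 - (qh z:RR)^(6*h+4)) * (∏ i ∈ range (2*h+1), (1-(qh z:RR)^(3*i+2)))^3 * (∏ i ∈ range (2*h+1), (1-(qh z:RR)^(3*i+3)))^3 := by
  have D1 := Dd_one h z hz
  have hQ : ((ww^(6*(3*h+2):ℤ) : RRˣ) : RR) = (qh z:RR) ^(3*h+2) := by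
    rw [← Units.val_pow_eq_pow_val, qh_pow, hz.pow_eq_one, zz0_one, one_mul]; push_cast; rfl
  have hQW : ((ww^(6*(3*h+2):ℤ) : RRˣ) : RR) * ((ww^(-(6*(3*h+2)):ℤ) : RRˣ):RR) = 1 := by
    rw [zpow_neg]; exact Units.mul_inv _
  have eQ : (PowerSeries.X : RR) ∣ 1 - ((ww^(6*(3*h+2):ℤ) : RRˣ) : RR) := ww_dvd _
  generalize ((ww^(-(6*(3*h+2)):ℤ) : RRˣ):RR) = W at *
  generalize ((ww^(6*(3*h+2):ℤ) : RRˣ):RR) = Q at *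
  have ePP : PP (qh z:RR) 1 (2*h+1) = Pgen (qh z : RR) (2*h+1) (fun i => (1-(qh z:RR)^(3*i+1))^6) (fun i => (1-(qh z:RR)^(3*i+3))^6) := by
    apply Pgen_congr <;> intro i <;> simp only [Np, Dp] <;> ring
  unfold Dd at D1
  rw [ePP] at D1
  have U : IsUnit ((∏ i ∈ range h, (qh z:RR)^(3*i+3))^3) := by
    refine IsUnit.pow _ ?_
    rw [IsUnit.prod_iff]; intro i _; exact (qh z).isUnit.pow _
  rw [← U.dvd_mul_left]
  have pp := pairprod (qh z:RR) 1 h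
  simp only [one_mul] at pp
  rw [← hQ] at pp
  have aF := approxF (qh z:RR) PowerSeries.X Q h eQ
  have a3 := dvd_mul_sub _ _ _ _ _ (dvd_mul_sub _ _ _ _ _ aF aF) aF
  rw [show 6*h+4 = (3*h+2)*2 by ring, pow_mul, ← hQ]
  unfold kap at D1
  generalize Pgen (qh z : RR) (2*h+1) (fun i => (1-(qh z:RR)^(3*i+1))^6) (fun i => (1-(qh z:RR)^(3*i+3))^6) = PG at *
  generalize ∏ i ∈ range h, ((1 - Q*(qh z:RR)^(3*i+3))*((qh z:RR)^(3*i+3) - Q)) = GG at *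
  generalize ∏ i ∈ range (2*h+1), (1-(qh z:RR)^(3*i+3)) = F3 at *
  generalize ∏ i ∈ range (2*h+1), (1-(qh z:RR)^(3*i+2)) = F2 at *
  generalize ∏ i ∈ range h, (1-(qh z:RR)^(3*i+3)) = ph at *
  generalize ∏ i ∈ range h, (qh z:RR)^(3*i+3) = Pi at *
  obtain ⟨a, ha⟩ := a3
  obtain ⟨b, hb⟩ := D1
  obtain ⟨c, hc⟩ := eQ
  have m1 : ((-1:RR)^h)^2 = 1 := by rw [← pow_mul, mul_comm, pow_mul]; simp
  have m3 : (-Q)^h = (-1)^h * Q^h := by rw [← mul_pow]; ring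
  rw [m3] at ha
  have q3 : Q^(3*h+2) = (Q^h)^3 * Q^2 := by ring
  rw [q3] at hb
  generalize ((-1:RR)^h) = sg at *
  generalize Q^h = Qh at *
  simp only [JJ, one_pow, mul_one] at hb
  have hJ : Q^2*((1+1+1+1+1) - W*(1+1+1+1+1)+(W^3-Q^2)) = (1-Q)^3*(Q+3+W) := by
    linear_combination (-5*Q + W*(Q*W+1) + 3 - 3*Q + Q^2)*hQW
  have hF : Pi^3*F2^3 = (1-Q)^3*GG^3 := by
    rw [← mul_pow, pp]; ring
  have hG : GG^3 = sg*Qh^3*ph^6 + PowerSeries.X^2*a := by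
    linear_combination ha + sg*Qh^3*ph^6*m1
  have hW2 : Q + W - 2 = W*(PowerSeries.X*c)^2 := by
    rw [← hc]; linear_combination (2-Q)*hQW
  have h5 : (1-Q^2)*(1-Q)^3 = (1+Q)*(PowerSeries.X*c)^4 := by rw [← hc]; ring
  refine ⟨b + (1+Q)*c^4*F3^3*(Qh^3*sg*ph^6*W*c^2 - 5*a), ?_⟩
  have g1 : Pi^3*(PG - 5*(1-Q^2)*F2^3*F3^3) = PowerSeries.X^6*b + (1-Q^2)*(1-Q)^3*F3^3*(Qh^3*sg*ph^6*(Q+3+W) - 5*GG^3) := by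
    linear_combination hb - 5*(1-Q^2)*F3^3*hF + F3^3*Qh^3*(1-Q^2)*sg*ph^6*hJ
  have g2 : Qh^3*sg*ph^6*(Q+3+W) - 5*GG^3 = PowerSeries.X^2*(Qh^3*sg*ph^6*W*c^2 - 5*a) := by
    linear_combination -5*hG + Qh^3*sg*ph^6*hW2
  rw [g1, g2, h5]; ring


section P6
variable {A B : Type*} [CommRing A] [CommRing B]
def Af (q : A) (h M : ℕ) : A :=
  Pgen q M (fun i => (1-q^(3*i+1))^6) (fun i => (1-q^(3*i+3))^6) -
   5 * (1 - q^(6*h+4)) * (∏ i ∈ range (2*h+1), (1-q^(3*i+2)))^3 * (∏ i ∈ range (2*h+1), (1-q^(3*i+3)))^3 *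
     ∏ i ∈ Ico (2*h+1) M, (1-q^(3*i+3))^6

def bf (q : A) (M : ℕ) : A := ∏ i ∈ range M, (1-q^(3*i+3))

lemma Af_map (f : A →+* B) (q : A) (h M : ℕ) : f (Af q h M) = Af (f q) h M := by
  unfold Af
  rw [map_sub, Pgen_map]
  have h5 : f 5 = 5 := map_ofNat f 5
  simp [map_prod, h5]

lemma bf_map (f : A →+* B) (q : A) (M : ℕ) : f (bf q M) = bf (f q) M := by
  simp [bf, map_prod]

lemma bf_mul (q : A) (m M : ℕ) (h : m ≤ M) : bf q m * ∏ i ∈ Ico m M, (1-q^(3*i+3)) = bf q M :=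
  prod_range_mul_prod_Ico _ h

lemma Pgen_split (q e : A) (m M : ℕ) (h : m ≤ M) (N D : ℕ → A) (he : e ∣ N m) :
    e ∣ Pgen q M N D - Pgen q m N D * ∏ i ∈ Ico m M, D i := by
  unfold Pgen
  rw [← sum_range_add_sum_Ico _ (show m+1 ≤ M+1 by omega)]
  rw [sum_mul, add_comm, add_sub_assoc]
  apply dvd_add
  · apply dvd_sum
    intro k hk
    have hk' := mem_Ico.1 hk
    apply Dvd.dvd.mul_right
    apply Dvd.dvd.mul_left
    exact he.trans (dvd_prod_of_mem _ (mem_range.2 (by omega)))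
  · rw [← sum_sub_distrib]
    apply dvd_sum
    intro k hk
    have hk' := mem_range.1 hk
    rw [mul_assoc _ (∏ i ∈ Ico k m, D i), prod_Ico_consecutive _ (by omega) h]
    simp
end P6

lemma one_sub_unit (z : ℂˣ) (k : ℕ) (h : z^k ≠ 1) : IsUnit (1 - (qh z:RR)^k) := by
  apply RR_isUnit
  rw [← Units.val_pow_eq_pow_val, qh_pow, Units.val_mul, map_sub, map_mul, cc_ww, zz0_val]
  simp
  intro h0
  apply h; apply Units.ext
  push_cast
  linear_combination -h0

lemma one_sub_X (z : ℂˣ) (k : ℕ) (hk : 0 < k) (h : z^k = 1) : ∃ u : RRˣ, 1 - (qh z:RR)^k = PowerSeries.X * (u:RR) := by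
  obtain ⟨u, hu⟩ := ww_int (6*k) (by omega)
  refine ⟨-u, ?_⟩
  rw [← Units.val_pow_eq_pow_val, qh_pow, h, zz0_one, one_mul]
  push_cast
  linear_combination -hu

lemma coeff_qh (z : ℂˣ) (k : ℕ) : PowerSeries.constantCoeff ((qh z:RR)^k) = (z:ℂ)^k := by
  rw [← Units.val_pow_eq_pow_val, qh_pow, Units.val_mul, map_mul, cc_ww, zz0_val]
  simp

lemma div_n (h M : ℕ) (hM : M = 2*h+1 ∨ M = 3*h+1) (z : ℂˣ) (hz : IsPrimitiveRoot z (3*h+2)) :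
    (PowerSeries.X:RR)^6 * bf (qh z:RR) M ^ 6 ∣ Af (qh z:RR) h M := by
  have U : IsUnit (bf (qh z:RR) M ^ 6) := by
    refine IsUnit.pow _ ?_
    unfold bf
    rw [IsUnit.prod_iff]
    intro i hi
    have hi' := mem_range.1 hi
    apply one_sub_unit
    intro h0
    have h1 := (hz.pow_eq_one_iff_dvd _).1 h0
    have h2 : 3*h+2 ∣ i+1 := by
      have : Nat.Coprime (3*h+2) 3 := by
        rw [Nat.coprime_comm, Nat.Prime.coprime_iff_not_dvd Nat.prime_three]; omega
      apply this.dvd_of_dvd_mul_left; convert h1 using 1; ring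
    have := Nat.le_of_dvd (by omega) h2
    omega
  rw [U.mul_right_dvd]
  have s := Pgen_split (qh z:RR) (PowerSeries.X^6) (2*h+1) M (by omega) (fun i => (1-(qh z:RR)^(3*i+1))^6) (fun i => (1-(qh z:RR)^(3*i+3))^6)
    (by
      obtain ⟨u, hu⟩ := one_sub_X z (3*(2*h+1)+1) (by omega) (by
        rw [show 3*(2*h+1)+1 = (3*h+2)*2 by ring, pow_mul, hz.pow_eq_one, one_pow])
      simp only [hu, mul_pow]
      exact Dvd.intro _ rfl)
  have m := main_n h z hz
  unfold Af
  have := dvd_add s (Dvd.dvd.mul_right m (∏ i ∈ Ico (2*h+1) M, (1-(qh z:RR)^(3*i+3))^6))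
  convert this using 1
  ring

lemma exists_mult (d c k : ℕ) (hd : 0 < d) (h3 : d % 3 ≠ 0) : ∃ i < d, d ∣ 3*(k+i)+c := by
  obtain ⟨u, s, hu⟩ : ∃ u s : ℕ, 3*u = 1 + d*s := by
    rcases (by omega : d % 3 = 1 ∨ d % 3 = 2) with h | h
    · exact ⟨(2*d+1)/3, 2, by omega⟩
    · exact ⟨(d+1)/3, 1, by omega⟩
  refine ⟨((d-1)*(3*k+c)*u) % d, Nat.mod_lt _ hd, ?_⟩
  have e := Nat.div_add_mod ((d-1)*(3*k+c)*u) d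
  obtain ⟨d', rfl⟩ : ∃ d', d = d'+1 := ⟨d-1, by omega⟩
  rw [show d'+1-1 = d' by omega] at *
  set r := (d'*(3*k+c)*u) % (d'+1)
  set w := (d'*(3*k+c)*u) / (d'+1)
  have : (3*(k+r)+c) + (d'+1)*(3*w) = (d'+1)*((3*k+c)*(1+d'*s)) := by
    zify at *
    linear_combination 3*e + d'*(3*k+c)*hu
  have h1 : (d'+1) ∣ (3*(k+r)+c) + (d'+1)*(3*w) := ⟨_, this⟩
  exact (Nat.dvd_add_iff_left (Dvd.intro _ rfl)).2 h1

lemma rho_ex (d c : ℕ) (hc : 0 < c) (hd : 0 < d) (h3 : d % 3 ≠ 0) (z : ℂˣ) (hz : IsPrimitiveRoot z d) (k : ℕ) :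
    bf (qh z:RR) k ∣ ∏ i ∈ range k, (1-(qh z:RR)^(3*i+c)) := by
  have cop : Nat.Coprime d 3 := by
    rw [Nat.coprime_comm, Nat.Prime.coprime_iff_not_dvd Nat.prime_three]; omega
  have hne : ∀ i, z^(3*i+3) = 1 → d ∣ i+1 := by
    intro i h0
    have h1 := (hz.pow_eq_one_iff_dvd _).1 h0
    apply cop.dvd_of_dvd_mul_left; convert h1 using 1; ring
  induction k using Nat.strong_induction_on with
  | _ k ih =>
    by_cases hk : k < d
    · apply IsUnit.dvd
      unfold bf
      rw [IsUnit.prod_iff]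
      intro i hi
      have hi' := mem_range.1 hi
      apply one_sub_unit
      intro h0
      have := Nat.le_of_dvd (by omega) (hne i h0)
      omega
    · obtain ⟨l, rfl⟩ : ∃ l, k = l + d := ⟨k-d, by omega⟩
      unfold bf
      rw [prod_range_add, prod_range_add]
      apply mul_dvd_mul (ih l (by omega))
      obtain ⟨i0, hi0, h0⟩ := exists_mult d 3 l hd h3
      obtain ⟨i1, hi1, h1⟩ := exists_mult d c l hd h3
      obtain ⟨u, hu⟩ := one_sub_X z (3*(l+i0)+3) (by omega) ((hz.pow_eq_one_iff_dvd _).2 h0)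
      obtain ⟨v, hv⟩ := one_sub_X z (3*(l+i1)+c) (by omega) ((hz.pow_eq_one_iff_dvd _).2 h1)
      have a1 : (PowerSeries.X:RR) ∣ ∏ x ∈ range d, (1-(qh z:RR)^(3*(l+x)+c)) :=
        dvd_trans ⟨v, hv⟩ (dvd_prod_of_mem (fun x => 1-(qh z:RR)^(3*(l+x)+c)) (mem_range.2 hi1))
      refine dvd_trans ?_ a1
      rw [← mul_prod_erase _ _ (mem_range.2 hi0)]
      have U : IsUnit (∏ x ∈ (range d).erase i0, (1-(qh z:RR)^(3*(l+x)+3))) := by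
        rw [IsUnit.prod_iff]
        intro i hi
        rw [mem_erase, mem_range] at hi
        apply one_sub_unit
        intro h2
        have p1 := hne _ h2
        have p0 := hne _ ((hz.pow_eq_one_iff_dvd _).2 h0)
        apply hi.1
        have p2 : (l+i+1) ≡ (l+i0+1) [MOD d] := ((Nat.modEq_zero_iff_dvd).2 p1).trans ((Nat.modEq_zero_iff_dvd).2 p0).symm
        have p3 : i ≡ i0 [MOD d] := by
          apply Nat.ModEq.add_left_cancel' l
          exact Nat.ModEq.add_right_cancel' 1 p2
        exact Nat.ModEq.eq_of_lt_of_lt p3 hi.2 hi0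
      rw [U.mul_right_dvd, hu, u.isUnit.mul_right_dvd]

lemma tau_sum (d m : ℕ) (hd : 0 < d) (hm : d ∣ 3*m+1) (h3 : d % 3 ≠ 0) (z : ℂ) (hz : IsPrimitiveRoot z d) (t : ℕ → ℂ)
    (ht : ∀ k, t (k+1) * (1 - z^(3*k+3)) = t k * (1 - z^(3*k+1))) (j : ℕ) :
    ∑ k ∈ range (d*j), (1 - z^(6*k+1))*z^(3*k)*t k^6 = 0 ∧
    ∑ k ∈ range (d*j+(m%d+1)), (1 - z^(6*k+1))*z^(3*k)*t k^6 = 0 := by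
  have cop : Nat.Coprime d 3 := by
    rw [Nat.coprime_comm, Nat.Prime.coprime_iff_not_dvd Nat.prime_three]; omega
  set μ := m % d with hμ
  have hμd : μ < d := Nat.mod_lt _ hd
  have hμ1 : d ∣ 3*μ+1 := by
    have e := Nat.div_add_mod m d
    rw [← e, ← hμ, show 3*(d*(m/d)+μ)+1 = d*(3*(m/d)) + (3*μ+1) by ring] at hm
    exact (Nat.dvd_add_right (Dvd.intro _ rfl)).1 hm
  have hz1 : z^(3*μ+1) = 1 := (hz.pow_eq_one_iff_dvd _).2 hμ1
  have zd : z^d = 1 := hz.pow_eq_one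
  have per : ∀ j i, z^(d*j+i) = z^i := by intro j i; rw [pow_add, pow_mul, zd, one_pow, one_mul]
  have hne : ∀ i, i + 1 < d → 1 - z^(3*i+3) ≠ 0 := by
    intro i hi h0
    have h1 := (hz.pow_eq_one_iff_dvd _).1 (show z^(3*i+3) = 1 by linear_combination -h0)
    have : d ∣ i + 1 := by apply cop.dvd_of_dvd_mul_left; convert h1 using 1; ring
    have := Nat.le_of_dvd (by omega) this
    omega
  have tp : ∀ j i, t (d*j+i) * ∏ l ∈ range i, (1 - z^(3*l+3)) = t (d*j) * ∏ l ∈ range i, (1 - z^(3*l+1)) := by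
    intro j i
    induction i with
    | zero => simp
    | succ i ih =>
      have := ht (d*j+i)
      rw [show 3*(d*j+i)+3 = d*(3*j)+(3*i+3) by ring, show 3*(d*j+i)+1 = d*(3*j)+(3*i+1) by ring, per, per] at this
      rw [prod_range_succ, prod_range_succ, ← add_assoc]
      linear_combination (∏ l ∈ range i, (1 - z^(3*l+3))) * this + (1 - z^(3*i+1)) * ih
  have hpr : ∀ i, i < d → ∏ l ∈ range i, (1 - z^(3*l+3)) ≠ 0 := by
    intro i hi
    rw [prod_ne_zero_iff]
    intro l hl
    have := mem_range.1 hl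
    exact hne l (by omega)
  have tz : ∀ j i, μ < i → i < d → t (d*j+i) = 0 := by
    intro j i h1 h2
    have := tp j i
    have z0 : ∏ l ∈ range i, (1 - z^(3*l+1)) = 0 := by
      rw [prod_eq_zero_iff]; exact ⟨μ, mem_range.2 h1, by rw [hz1]; ring⟩
    rw [z0, mul_zero] at this
    exact (mul_eq_zero.1 this).resolve_right (hpr i h2)
  have blk : ∀ j, ∑ x ∈ range (μ+1), (1 - z^(6*(d*j+x)+1))*z^(3*(d*j+x))*t (d*j+x)^6 = 0 := by
    intro j
    have PZ := Pgen_zero (fun x hx => self_eq_neg.1 hx) z μ hz1 (fun i => (1-z^(3*i+1))^6) (fun i => (1-z^(3*i+3))^6) (by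
      intro i l hil
      have h1 : z^(3*l+1) * z^(3*i+3) = 1 := by
        rw [← pow_add, ← hz1]; congr 1; omega
      rw [show 18*(i+1) = (3*i+3)*6 by ring, pow_mul]
      rw [← mul_pow]
      have : z^(3*i+3) * (1 - z^(3*l+1)) = -(1 - z^(3*i+3)) := by linear_combination -h1
      rw [this]; ring)
    have hD : ∏ l ∈ range μ, (1 - z^(3*l+3))^6 ≠ 0 := by
      rw [prod_pow]; exact pow_ne_zero _ (hpr μ hμd)
    apply (mul_eq_zero.1 ?_).resolve_right hD
    have : t (d*j)^6 * Pgen z μ (fun i => (1-z^(3*i+1))^6) (fun i => (1-z^(3*i+3))^6) = 0 := by rw [PZ, mul_zero]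
    rw [← this]
    unfold Pgen
    rw [sum_mul, mul_sum]
    apply sum_congr rfl
    intro i hi
    have hi' := mem_range.1 hi
    rw [← prod_range_mul_prod_Ico _ (show i ≤ μ by omega)]
    rw [show 6*(d*j+i)+1 = d*(6*j)+(6*i+1) by ring, show 3*(d*j+i) = d*(3*j)+3*i by ring, per, per]
    have := congrArg (fun x => x^6) (tp j i)
    simp only [mul_pow, ← prod_pow] at this
    linear_combination ((1 - z^(6*i+1))*z^(3*i)*∏ l ∈ Ico i μ, (1 - z^(3*l+3))^6) * this
  have first : ∑ k ∈ range (d*j), (1 - z^(6*k+1))*z^(3*k)*t k^6 = 0 := by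
    induction j with
    | zero => simp
    | succ j ih =>
      rw [mul_add, mul_one, sum_range_add, ih, zero_add]
      rw [← sum_range_add_sum_Ico _ (show μ+1 ≤ d by omega), blk, zero_add]
      apply sum_eq_zero
      intro i hi
      have := mem_Ico.1 hi
      rw [tz j i (by omega) (by omega)]; simp
  refine ⟨first, ?_⟩
  rw [sum_range_add, first, blk, zero_add]

lemma div_d (h M d : ℕ) (hM : M = 2*h+1 ∨ M = 3*h+1) (hd : 0 < d) (hdn : d ∣ 3*h+2) (z : ℂˣ) (hz : IsPrimitiveRoot z d) :
    (PowerSeries.X:RR) * bf (qh z:RR) M ^ 6 ∣ Af (qh z:RR) h M := by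
  have h3 : d % 3 ≠ 0 := by
    intro h0
    have : 3 ∣ 3*h+2 := (Nat.dvd_of_mod_eq_zero h0).trans hdn
    omega
  choose ρ hρ using rho_ex d 1 (by omega) hd h3 z hz
  obtain ⟨σ, hσ⟩ := rho_ex d 2 (by omega) hd h3 z hz (2*h+1)
  have g0 : ∀ k, 1 - (qh z:RR)^(3*k+3) ≠ 0 := by
    intro k
    rw [← Units.val_pow_eq_pow_val, qh_pow]
    exact nz _ _ (Or.inr (by push_cast; omega))
  have b0 : ∀ k, bf (qh z:RR) k ≠ 0 := by
    intro k; unfold bf; rw [prod_ne_zero_iff]; intro i _; exact g0 i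
  have hrec : ∀ k, ρ (k+1) * (1 - (qh z:RR)^(3*k+3)) = ρ k * (1 - (qh z:RR)^(3*k+1)) := by
    intro k
    apply mul_left_cancel₀ (b0 k)
    have h1 := hρ (k+1)
    rw [prod_range_succ, hρ k] at h1
    have h2 : bf (qh z:RR) (k+1) = bf (qh z:RR) k * (1 - (qh z:RR)^(3*k+3)) := prod_range_succ _ _
    rw [h2] at h1
    linear_combination -h1
  have hz' : IsPrimitiveRoot (z:ℂ) d := IsPrimitiveRoot.coe_units_iff.2 hz
  have dm : d ∣ 3*(2*h+1)+1 := by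
    rw [show 3*(2*h+1)+1 = (3*h+2)*2 by ring]; exact hdn.mul_right 2
  have TS := tau_sum d (2*h+1) hd dm h3 z hz' (fun k => PowerSeries.constantCoeff (ρ k)) (by
    intro k
    have := congrArg PowerSeries.constantCoeff (hrec k)
    simpa only [map_mul, map_sub, map_one, coeff_qh] using this)
  have S0 : ∑ k ∈ range (M+1), (1 - (z:ℂ)^(6*k+1))*(z:ℂ)^(3*k)*(PowerSeries.constantCoeff (ρ k))^6 = 0 := by
    rcases hM with rfl | rfl
    · have := (TS ((2*h+1)/d)).2
      rwa [← add_assoc, Nat.div_add_mod] at this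
    · obtain ⟨j, hj⟩ := hdn
      have := (TS j).1
      rwa [← hj] at this
  have SX : (PowerSeries.X:RR) ∣ ∑ k ∈ range (M+1), (1 - (qh z:RR)^(6*k+1))*(qh z:RR)^(3*k)*(ρ k)^6 := by
    rw [PowerSeries.X_dvd_iff, map_sum, ← S0]
    apply sum_congr rfl
    intro k _
    simp only [map_mul, map_sub, map_one, coeff_qh, map_pow (PowerSeries.constantCoeff) (ρ k)]
  have PG : Pgen (qh z:RR) M (fun i => (1-(qh z:RR)^(3*i+1))^6) (fun i => (1-(qh z:RR)^(3*i+3))^6)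
      = (∑ k ∈ range (M+1), (1 - (qh z:RR)^(6*k+1))*(qh z:RR)^(3*k)*(ρ k)^6) * bf (qh z:RR) M ^ 6 := by
    unfold Pgen
    rw [sum_mul]
    apply sum_congr rfl
    intro k hk
    have hk' := mem_range.1 hk
    rw [← bf_mul _ k M (by omega), prod_pow, prod_pow, hρ k]
    ring
  have R2 : (∏ i ∈ range (2*h+1), (1-(qh z:RR)^(3*i+2)))^3 * (∏ i ∈ range (2*h+1), (1-(qh z:RR)^(3*i+3)))^3 *
     ∏ i ∈ Ico (2*h+1) M, (1-(qh z:RR)^(3*i+3))^6 = σ^3 * bf (qh z:RR) M ^ 6 := by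
    rw [← bf_mul _ (2*h+1) M (by omega), prod_pow, hσ]
    have : ∏ i ∈ range (2*h+1), (1-(qh z:RR)^(3*i+3)) = bf (qh z:RR) (2*h+1) := rfl
    rw [this]; ring
  obtain ⟨u, hu⟩ := one_sub_X z (6*h+4) (by omega) (by
    rw [show 6*h+4 = 3*(2*h+1)+1 by ring]; exact (hz.pow_eq_one_iff_dvd _).2 dm)
  obtain ⟨s, hs⟩ := SX
  unfold Af
  rw [PG, hs, hu]
  refine ⟨s - 5*u*σ^3, ?_⟩
  linear_combination (-5*PowerSeries.X*(u:RR))*R2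


noncomputable def phi (z : ℂˣ) : Polynomial ℚ →+* RR :=
  Polynomial.eval₂RingHom ((PowerSeries.C : ℂ →+* RR).comp (algebraMap ℚ ℂ)) (qh z : RR)

lemma phi_X (z : ℂˣ) : phi z Polynomial.X = (qh z : RR) := by simp [phi]

lemma cc_phi (z : ℂˣ) (p : Polynomial ℚ) : PowerSeries.constantCoeff (phi z p) = Polynomial.aeval (z:ℂ) p := by
  unfold phi
  rw [Polynomial.coe_eval₂RingHom, Polynomial.hom_eval₂, Polynomial.aeval_def]
  have h := coeff_qh z 1
  rw [pow_one, pow_one] at h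
  rw [h]
  congr 1

lemma phi_dvd (z : ℂˣ) (d : ℕ) (hd : 0 < d) (hz : IsPrimitiveRoot z d) (p : Polynomial ℚ)
    (h : PowerSeries.X ∣ phi z p) : Polynomial.cyclotomic d ℚ ∣ p := by
  have hz' : IsPrimitiveRoot (z:ℂ) d := IsPrimitiveRoot.coe_units_iff.2 hz
  rw [PowerSeries.X_dvd_iff, cc_phi] at h
  rw [Polynomial.cyclotomic_eq_minpoly_rat hz' hd]
  exact minpoly.dvd _ _ h

lemma phi_cyc (z : ℂˣ) (d : ℕ) (hd : 0 < d) (hz : IsPrimitiveRoot z d) :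
    ∃ u : RRˣ, phi z (Polynomial.cyclotomic d ℚ) = PowerSeries.X * (u:RR) := by
  have hz' : IsPrimitiveRoot (z:ℂ) d := IsPrimitiveRoot.coe_units_iff.2 hz
  have h1 : PowerSeries.X ∣ phi z (Polynomial.cyclotomic d ℚ) := by
    rw [PowerSeries.X_dvd_iff, cc_phi, Polynomial.cyclotomic_eq_minpoly_rat hz' hd]
    exact minpoly.aeval _ _
  obtain ⟨a, ha⟩ := h1
  obtain ⟨g, hg⟩ := Polynomial.cyclotomic.dvd_X_pow_sub_one d ℚ
  have h2 := congrArg (phi z) hg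
  rw [map_mul, map_sub, map_pow, phi_X, map_one, ha] at h2
  obtain ⟨u, hu⟩ := one_sub_X z d hd hz.pow_eq_one
  have h3 : PowerSeries.X * (-(u:RR)) = PowerSeries.X * (a * phi z g) := by
    linear_combination h2 + hu
  have h4 := mul_left_cancel₀ PowerSeries.X_ne_zero h3
  have h5 : IsUnit a := isUnit_of_dvd_unit ⟨_, h4⟩ u.isUnit.neg
  exact ⟨h5.unit, ha⟩

lemma phi_pow_dvd (z : ℂˣ) (d : ℕ) (hd : 0 < d) (hz : IsPrimitiveRoot z d) (k : ℕ) : ∀ (p : Polynomial ℚ)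
    (_ : PowerSeries.X^k ∣ phi z p), Polynomial.cyclotomic d ℚ ^ k ∣ p := by
  induction k with
  | zero => intro p _; simp
  | succ k ih =>
    intro p h
    obtain ⟨r, hr⟩ := phi_dvd z d hd hz p (dvd_trans (dvd_pow_self _ (by omega)) h)
    obtain ⟨u, hu⟩ := phi_cyc z d hd hz
    rw [hr, map_mul, hu, pow_succ', mul_assoc, mul_dvd_mul_iff_left PowerSeries.X_ne_zero, u.isUnit.dvd_mul_left] at h
    rw [hr, pow_succ']
    exact mul_dvd_mul_left _ (ih r h)

def GG (A B P : Polynomial ℚ) : Prop := ∃ r s : Polynomial ℚ, IsCoprime s P ∧ A * s = B * P * r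

lemma GG_phi (z : ℂˣ) (d e : ℕ) (hd : 0 < d) (hz : IsPrimitiveRoot z d) (A B : Polynomial ℚ) (hB : B ≠ 0)
    (h : PowerSeries.X^e * phi z B ∣ phi z A) : GG A B (Polynomial.cyclotomic d ℚ ^ e) := by
  have irr := Polynomial.cyclotomic.irreducible_rat hd
  obtain ⟨s, hs, hns⟩ := (FiniteMultiplicity.of_prime_left irr.prime hB).exists_eq_pow_mul_and_not_dvd
  generalize multiplicity (Polynomial.cyclotomic d ℚ) B = v at hs
  obtain ⟨u, hu⟩ := phi_cyc z d hd hz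
  have h1 : PowerSeries.X^(e+v) ∣ phi z A := by
    refine dvd_trans ?_ h
    rw [hs, map_mul, map_pow, hu, mul_pow, pow_add]
    exact ⟨(u:RR)^v * phi z s, by ring⟩
  obtain ⟨r, hr⟩ := phi_pow_dvd z d hd hz _ _ h1
  refine ⟨r, s, ?_, ?_⟩
  · exact (((irr.coprime_iff_not_dvd).2 hns).symm).pow_right
  · rw [hr, pow_add]
    conv_rhs => rw [hs]
    ring

lemma GG_mul (A B P Q : Polynomial ℚ) (hPQ : IsCoprime P Q) (h1 : GG A B P) (h2 : GG A B Q) : GG A B (P*Q) := by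
  obtain ⟨r1, s1, c1, e1⟩ := h1
  obtain ⟨r2, s2, c2, e2⟩ := h2
  refine ⟨r1 + r2, s1*Q + s2*P, ?_, by linear_combination Q*e1 + P*e2⟩
  apply IsCoprime.mul_right
  · exact (IsCoprime.mul_left c1 hPQ.symm).add_mul_right_left s2
  · rw [add_comm]
    exact (IsCoprime.mul_left c2 hPQ).add_mul_right_left s1

lemma GG_prod (A B : Polynomial ℚ) (S : Finset ℕ) (h : ∀ d ∈ S, GG A B (Polynomial.cyclotomic d ℚ)) :
    GG A B (∏ d ∈ S, Polynomial.cyclotomic d ℚ) := by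
  induction S using Finset.induction_on with
  | empty => exact ⟨A, B, by simp [isCoprime_one_right], by simp [mul_comm]⟩
  | insert a S ha ih =>
    rw [prod_insert ha]
    apply GG_mul _ _ _ _ _ (h a (by simp)) (ih (fun d hd => h d (by simp [hd])))
    apply IsCoprime.prod_right
    intro d hd
    apply Polynomial.cyclotomic.isCoprime_rat
    rintro rfl; exact ha hd

lemma one_sub_X_ne (i : ℕ) : (1 : Polynomial ℚ) - Polynomial.X^(i+1) ≠ 0 := by
  have := (Polynomial.X_pow_sub_C_ne_zero (n := i+1) (by omega) (1:ℚ))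
  rw [← neg_sub, neg_ne_zero]; simpa using this

lemma GG_final (h M : ℕ) (hM : M = 2*h+1 ∨ M = 3*h+1) :
    GG (Af (Polynomial.X : Polynomial ℚ) h M) ((1 - Polynomial.X) * bf (Polynomial.X : Polynomial ℚ) M ^ 6)
      ((∑ i ∈ Finset.range (3*h+2), Polynomial.X ^ i) * Polynomial.cyclotomic (3*h+2) ℚ ^ 5) := by
  have hB : (1 - Polynomial.X) * bf (Polynomial.X : Polynomial ℚ) M ^ 6 ≠ 0 := by
    apply mul_ne_zero
    · have := one_sub_X_ne 0; simpa using this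
    · apply pow_ne_zero; unfold bf; rw [prod_ne_zero_iff]; intro i _; exact one_sub_X_ne _
  have ex : ∀ d, 0 < d → ∃ z : ℂˣ, IsPrimitiveRoot z d := by
    intro d hd
    have := Complex.isPrimitiveRoot_exp d (by omega)
    obtain ⟨u, hu⟩ := this.isUnit (by omega)
    exact ⟨u, by rw [← IsPrimitiveRoot.coe_units_iff, hu]; exact this⟩
  have un : ∀ (z : ℂˣ) (d : ℕ), 1 < d → IsPrimitiveRoot z d → ∀ x y : RR, x * bf (qh z:RR) M ^ 6 ∣ y →
      x * phi z ((1 - Polynomial.X) * bf (Polynomial.X : Polynomial ℚ) M ^ 6) ∣ y := by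
    intro z d hd hz x y hxy
    have U : IsUnit (1 - (qh z:RR)^1) := by
      apply one_sub_unit
      intro h0
      have := (hz.pow_eq_one_iff_dvd _).1 h0
      have := Nat.le_of_dvd (by omega) this
      omega
    rw [pow_one] at U
    rw [map_mul, map_pow, bf_map, map_sub, map_one, phi_X, mul_left_comm, U.mul_left_dvd]
    exact hxy
  have e1 : (∑ i ∈ Finset.range (3*h+2), (Polynomial.X : Polynomial ℚ) ^ i) * Polynomial.cyclotomic (3*h+2) ℚ ^ 5
     = (∏ d ∈ ((Nat.divisors (3*h+2)).erase 1).erase (3*h+2), Polynomial.cyclotomic d ℚ) * Polynomial.cyclotomic (3*h+2) ℚ ^ 6 := by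
    rw [← Polynomial.prod_cyclotomic_eq_geom_sum (by omega), ← mul_prod_erase _ _ (show 3*h+2 ∈ (Nat.divisors (3*h+2)).erase 1 by simp)]
    ring
  rw [e1]
  apply GG_mul
  · apply IsCoprime.pow_right
    apply IsCoprime.prod_left
    intro d hd
    apply Polynomial.cyclotomic.isCoprime_rat
    exact (mem_erase.1 hd).1
  · apply GG_prod
    intro d hd
    simp only [mem_erase, Nat.mem_divisors] at hd
    have hd0 : 0 < d := Nat.pos_of_dvd_of_pos hd.2.2.1 (by omega)
    obtain ⟨z, hz⟩ := ex d hd0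
    have := GG_phi z d 1 hd0 hz _ _ hB (un z d (by omega) hz _ (phi z (Af (Polynomial.X : Polynomial ℚ) h M)) (by
      rw [Af_map, phi_X, pow_one]
      exact div_d h M d hM hd0 hd.2.2.1 z hz))
    simpa using this
  · obtain ⟨z, hz⟩ := ex (3*h+2) (by omega)
    apply GG_phi z (3*h+2) 6 (by omega) hz _ _ hB (un z (3*h+2) (by omega) hz _ _ _)
    rw [Af_map, phi_X]
    exact div_n h M hM z hz

lemma qq_ne (i : ℕ) : 1 - q^(i+1) ≠ 0 := by
  have h := one_sub_X_ne i
  have := (map_ne_zero_iff (algebraMap (Polynomial ℚ) (RatFunc ℚ)) (RatFunc.algebraMap_injective ℚ)).2 h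
  simpa [q, RatFunc.algebraMap_X] using this

lemma qpoch_eq (c k : ℕ) : qpoch (q^c) (q^3) k = ∏ i ∈ range k, (1 - q^(3*i+c)) := by
  unfold qpoch
  apply prod_congr rfl
  intro i _
  rw [← pow_mul, ← pow_add, add_comm]

lemma qint_nat (r : ℕ) : qint (r:ℤ) = (1 - q^r)/(1-q) := by
  unfold qint; rw [zpow_natCast]

lemma fin_eq (h M : ℕ) (hM : 2*h+1 ≤ M) :
    (∑ k ∈ Finset.range (M + 1),
        qint (6 * k + 1) * (qpoch q (q ^ 3) k ^ 6 / qpoch (q ^ 3) (q ^ 3) k ^ 6) *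
          q ^ (3 * k)) -
      (5 * qint (2 * (3*h+2 : ℕ)) *
        (qpoch (q ^ 2) (q ^ 3) (2*h+1) ^ 3 /
          qpoch (q ^ 3) (q ^ 3) (2*h+1) ^ 3)) = Af q h M / ((1 - q) * bf q M ^ 6) := by
  have q1 : 1 - q ≠ 0 := by have := qq_ne 0; simpa using this
  have b0 : ∀ k, bf q k ≠ 0 := by
    intro k; unfold bf; rw [prod_ne_zero_iff]; intro i _; exact qq_ne _
  have c0 : ∀ k, ∏ i ∈ Ico k M, (1-q^(3*i+3)) ≠ 0 := by
    intro k; rw [prod_ne_zero_iff]; intro i _; exact qq_ne _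
  have e3 : ∀ k, qpoch (q^3) (q^3) k = bf q k := fun k => qpoch_eq 3 k
  have e1 : ∀ k, qpoch q (q^3) k = ∏ i ∈ range k, (1 - q^(3*i+1)) := fun k => by
    have := qpoch_eq 1 k
    rwa [pow_one] at this
  unfold Af
  rw [sub_div]
  congr 1
  · unfold Pgen
    rw [sum_div]
    apply sum_congr rfl
    intro k hk
    have hk' := mem_range.1 hk
    rw [e3, e1, show (6*(k:ℤ)+1) = ((6*k+1 : ℕ):ℤ) by push_cast; ring, qint_nat, ← bf_mul q k M (by omega), prod_pow, prod_pow]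
    have := b0 k
    have := c0 k
    field_simp
  · rw [e3, qpoch_eq, show (2*((3*h+2:ℕ):ℤ)) = ((6*h+4 : ℕ):ℤ) by push_cast; ring, qint_nat, ← bf_mul q (2*h+1) M hM, prod_pow]
    have : ∏ i ∈ range (2*h+1), (1-q^(3*i+3)) = bf q (2*h+1) := rfl
    rw [this]
    have := b0 (2*h+1)
    have := c0 (2*h+1)
    field_simp


theorem stmt2 (n : ℕ) (hpos : 0 < n) (hmod : n % 3 = 2) (M : ℕ)
    (hM : M = (2 * n - 1) / 3 ∨ M = n - 1) :
    qcong
      (∑ k ∈ Finset.range (M + 1),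
        qint (6 * k + 1) * (qpoch q (q ^ 3) k ^ 6 / qpoch (q ^ 3) (q ^ 3) k ^ 6) *
          q ^ (3 * k))
      (5 * qint (2 * n) *
        (qpoch (q ^ 2) (q ^ 3) ((2 * n - 1) / 3) ^ 3 /
          qpoch (q ^ 3) (q ^ 3) ((2 * n - 1) / 3) ^ 3))
      ((∑ i ∈ Finset.range n, Polynomial.X ^ i) * Polynomial.cyclotomic n ℚ ^ 5) := by
  obtain ⟨h, rfl⟩ : ∃ h, n = 3*h+2 := ⟨n/3, by omega⟩
  have hm : (2*(3*h+2)-1)/3 = 2*h+1 := by omega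
  rw [hm] at hM ⊢
  have hM' : M = 2*h+1 ∨ M = 3*h+1 := by omega
  obtain ⟨r, s, hc, e⟩ := GG_final h M hM'
  refine ⟨r, s, hc, ?_⟩
  rw [fin_eq h M (by omega)]
  have hs : s ≠ 0 := by
    rintro rfl
    rw [isCoprime_zero_left] at hc
    have h1 := isUnit_of_dvd_unit (dvd_mul_of_dvd_right (dvd_pow_self (Polynomial.cyclotomic (3*h+2) ℚ) (by norm_num : (5:ℕ) ≠ 0)) _) hc
    exact (Polynomial.cyclotomic.irreducible_rat (by omega : 0 < 3*h+2)).not_isUnit h1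
  have inj := RatFunc.algebraMap_injective ℚ
  have e' := congrArg (algebraMap (Polynomial ℚ) (RatFunc ℚ)) e
  rw [map_mul, map_mul _ (_ * _) r, map_mul _ (_ * _) (_ * _), map_mul _ (1 - _), map_pow _ (bf _ _), Af_map, bf_map, map_sub, map_one, RatFunc.algebraMap_X] at e'
  have hs' : algebraMap (Polynomial ℚ) (RatFunc ℚ) s ≠ 0 := (map_ne_zero_iff _ inj).2 hs
  have q1 : 1 - q ≠ 0 := by have := qq_ne 0; simpa using this
  have b0 : bf q M ≠ 0 := by
    unfold bf; rw [prod_ne_zero_iff]; intro i _; exact qq_ne _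
  have hb : (1-q) * bf q M ^ 6 ≠ 0 := mul_ne_zero q1 (pow_ne_zero _ b0)
  change Af q h M * _ = (1-q) * bf q M ^ 6 * _ * _ at e'
  rw [← mul_div_assoc, div_eq_div_iff hb hs', e']
  ring
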